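/- No map projection preserves the Polsby-Popper ordering: let φ be a homeomorphism from a nonempty open subset U of S² (with the subspace topology) onto an open subset V of EuclideanSpace ℝ (Fin 2). For Ω ⊆ S² define its spherical Polsby-Popper score PP_S(Ω) = 4π·μH²(Ω)/(μH¹(closure(Ω) ∩ closure(S² \ Ω)))², and for Ω′ ⊆ EuclideanSpace ℝ (Fin 2) define its planar Polsby-Popper score PP_pl(Ω′) = 4π·vol(Ω′)/(μH¹(frontier Ω′))², both computed in the extended nonnegative reals ℝ≥0∞. Then there exist nonempty sets A, B ⊆ U, each open in S² with compact closure contained in U and with A ⊆ B, such that PP_S(A) < PP_S(B) but PP_pl(φ '' A) ≥ PP_pl(φ '' B). In particular, φ does not preserve the ordering of regions by Polsby-Popper score. -/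

import Mathlib

open Metric MeasureTheory Real

/-- The spherical Polsby-Popper score of a region `Ω ⊆ S²`: `4π · area / perimeter²`,
where the area is the 2-dimensional Hausdorff measure of `Ω` and the perimeter is the
1-dimensional Hausdorff measure of the boundary of `Ω` relative to the sphere. -/
noncomputable def ppSphere (Ω : Set (EuclideanSpace ℝ (Fin 3))) : ENNReal :=
  ENNReal.ofReal (4 * π) * μH[2] Ω /
    (μH[1] (closure Ω ∩ closure (sphere (0 : EuclideanSpace ℝ (Fin 3)) 1 \ Ω))) ^ 2

/-- The planar Polsby-Popper score of a region `Ω′` in the plane: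
`4π · vol(Ω′) / (μH¹(frontier Ω′))²`. -/
noncomputable def ppPlane (Ω' : Set (EuclideanSpace ℝ (Fin 2))) : ENNReal :=
  ENNReal.ofReal (4 * π) * volume Ω' / (μH[1] (frontier Ω')) ^ 2

/-!
Suppose that a projection `e` preserved the strict ordering of nested regions by score. Cutting a
region along a compact set of finite length changes only its perimeter, not its area, so the
ordering remembers how lengths compare. Cutting spherical caps along curves shows first that `e`
preserves finiteness of length of compact sets, in both directions. If `μH[1] T ≤ μH[1] K`, then
`T`, surrounded by the frontier of a neighbourhood of `T` whose image has very small area, may be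
traded for `K`, and the ordering forces `μH[1] (e '' T) ≤ μH[1] (e '' K)`.

Pull back the planar segment from `e u` to `e v` and move this curve by an isometry taking `u`, `v`
to `x`, `y`, where `dist u v = dist x y`: its image has the same length and joins `e x` to `e y`.
So the distance of images depends only on the distance of the points. Then a regular hexagon on a
small circle of the sphere goes to a hexagon whose centre, the image of the pole, is as far from its
vertices as these are from each other. On the sphere the side of the hexagon is shorter than the
radius, so the distance of images takes the same value at smaller and smaller radii. By continuity
it is zero, against injectivity.
-/

section Topology

variable {X Y : Type*} [TopologicalSpace X] [TopologicalSpace Y]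
  {e : OpenPartialHomeomorph X Y} {U A E N W : Set X}

lemma disjoint_frontier_of_isOpen_of_subset (hW : IsOpen W) (hE : E ⊆ W) :
    Disjoint (frontier W) E := by
  rw [hW.frontier_eq]
  exact Set.disjoint_sdiff_left.mono_right hE

lemma frontier_sdiff_of_isClosed_subset_isOpen (hW : IsOpen W) (hN : IsClosed N) (hNW : N ⊆ W) :
    frontier (W \ N) = frontier W ∪ frontier N := by
  have hdisj := disjoint_frontier_of_isOpen_of_subset hW hNW
  have houter : frontier (W \ N) ∩ Nᶜ = frontier W ∩ Nᶜ := frontier_inter_open_inter hN.isOpen_compl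
  have hinner : frontier (W \ N) ∩ W = frontier N ∩ W := by
    rw [Set.sdiff_eq, Set.inter_comm W, frontier_inter_open_inter hW, frontier_compl]
  refine (frontier_inter_subset W Nᶜ).trans ?_ |>.antisymm (Set.union_subset ?_ ?_)
  · rw [frontier_compl]
    exact Set.union_subset_union Set.inter_subset_left Set.inter_subset_right
  · exact fun x hx => (houter.ge ⟨hx, Set.disjoint_left.1 hdisj hx⟩).1
  · exact fun x hx => (hinner.ge ⟨hx, hNW (hN.frontier_subset hx)⟩).1

lemma frontier_sdiff_of_interior_eq_empty (hW : IsOpen W) (hE : IsClosed E) (hEW : E ⊆ W)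
    (hE₀ : interior E = ∅) : frontier (W \ E) = frontier W ∪ E := by
  rw [frontier_sdiff_of_isClosed_subset_isOpen hW hE hEW, hE.frontier_eq, hE₀, Set.sdiff_empty]

lemma frontier_sdiff_frontier (hW : IsOpen W) (hN : IsClosed N) (hNW : N ⊆ W) :
    frontier (W \ frontier N) = frontier W ∪ frontier N :=
  frontier_sdiff_of_interior_eq_empty hW isClosed_frontier (hN.frontier_subset.trans hNW)
    (interior_frontier hN)

lemma subset_sdiff_frontier (hNW : N ⊆ W) (hE : E ⊆ interior N) : E ⊆ W \ frontier N :=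
  fun _ hx => ⟨hNW (interior_subset (hE hx)), fun h => h.2 (hE hx)⟩

lemma frontier_image_of_isCompact_closure [T2Space Y] (hA : IsCompact (closure A))
    (hAe : closure A ⊆ e.source) :
    frontier (e '' A) = e '' frontier A := by
  have himage : e.IsImage A (e '' A) := by
    intro x hx
    exact e.injOn.mem_image_iff (subset_closure.trans hAe) hx
  have hcl : frontier (e '' A) ⊆ e.target := by
    have hc : IsCompact (e '' closure A) := hA.image_of_continuousOn (e.continuousOn.mono hAe)
    refine frontier_subset_closure.trans ?_
    refine (closure_minimal (Set.image_mono subset_closure) hc.isClosed).trans ?_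
    exact e.mapsTo.mono_left hAe |>.image_subset
  have heq := himage.frontier.image_eq
  rw [Set.inter_eq_right.2 hcl, Set.inter_eq_right.2 (frontier_subset_closure.trans hAe)] at heq
  exact heq.symm

/-- The regions whose scores are compared: nonempty open sets whose closure is compact and
contained in the domain `U` of the projection. -/
structure IsRegion (U A : Set X) : Prop where
  nonempty : A.Nonempty
  isOpen : IsOpen A
  isCompact_closure : IsCompact (closure A)
  closure_subset : closure A ⊆ U

namespace IsRegion

lemma subset (hA : IsRegion U A) : A ⊆ U := subset_closure.trans hA.closure_subset

lemma frontier_subset (hA : IsRegion U A) : frontier A ⊆ U :=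
  frontier_subset_closure.trans hA.closure_subset

lemma sdiff (hA : IsRegion U A) (hE : IsClosed E) (hne : (A \ E).Nonempty) :
    IsRegion U (A \ E) where
  nonempty := hne
  isOpen := hA.isOpen.sdiff hE
  isCompact_closure := hA.isCompact_closure.of_isClosed_subset isClosed_closure
    (closure_mono Set.sdiff_subset)
  closure_subset := (closure_mono Set.sdiff_subset).trans hA.closure_subset

lemma sdiff_of_interior_eq_empty (hA : IsRegion U A) (hE : IsClosed E)
    (hE₀ : interior E = ∅) : IsRegion U (A \ E) := by
  refine hA.sdiff hE (Set.sdiff_nonempty.2 fun hAE => ?_)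
  exact (hA.isOpen.subset_interior_iff.2 hAE |>.trans_eq hE₀).not_gt hA.nonempty.empty_ssubset

lemma frontier_image_sdiff [T2Space Y] (hW : IsRegion e.source W) (hE : IsClosed E) (hEW : E ⊆ W)
    (hE₀ : interior E = ∅) : frontier (e '' (W \ E)) = e '' frontier W ∪ e '' E := by
  have hWE := hW.sdiff_of_interior_eq_empty hE hE₀
  rw [frontier_image_of_isCompact_closure hWE.isCompact_closure hWE.closure_subset,
    frontier_sdiff_of_interior_eq_empty hW.isOpen hE hEW hE₀, Set.image_union]

section Source

variable [MeasurableSpace X] {μ : Measure X}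

lemma measure_ne_zero [μ.IsOpenPosMeasure] (hW : IsRegion U W) : μ W ≠ 0 :=
  (hW.isOpen.measure_pos μ hW.nonempty).ne'

lemma measure_ne_top [IsFiniteMeasureOnCompacts μ] (hW : IsRegion U W) : μ W ≠ ⊤ :=
  measure_ne_top_of_subset subset_closure hW.isCompact_closure.measure_ne_top

end Source

section Target

variable [MeasurableSpace Y] {ν : Measure Y}

lemma measure_image_ne_zero [ν.IsOpenPosMeasure] (hW : IsRegion e.source W) : ν (e '' W) ≠ 0 :=
  ((e.isOpen_image_of_subset_source hW.isOpen hW.subset).measure_pos ν (hW.nonempty.image e)).ne'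

lemma measure_image_ne_top [IsFiniteMeasureOnCompacts ν] (hW : IsRegion e.source W) :
    ν (e '' W) ≠ ⊤ :=
  measure_ne_top_of_subset (Set.image_mono subset_closure)
    (hW.isCompact_closure.image_of_continuousOn
      (e.continuousOn.mono hW.closure_subset)).measure_ne_top

end Target

end IsRegion

end Topology

section Score

variable {X : Type*} [MetricSpace X] [MeasurableSpace X] [BorelSpace X] {μ : Measure X}
  {A B K : Set X}

lemma edist_le_hausdorffMeasure_one (hK : IsPreconnected K) {x y : X} (hx : x ∈ K) (hy : y ∈ K) :
    edist x y ≤ μH[1] K := by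
  have hIcc : Set.Icc 0 (dist x y) ⊆ dist x '' K :=
    (hK.image _ (by fun_prop)).Icc_subset ⟨x, hx, dist_self x⟩ ⟨y, hy, rfl⟩
  calc edist x y = μH[1] (Set.Icc 0 (dist x y)) := by
        rw [hausdorffMeasure_real, Real.volume_Icc, sub_zero, edist_dist]
    _ ≤ μH[1] (dist x '' K) := measure_mono hIcc
    _ ≤ μH[1] K := by
        simpa using (LipschitzWith.dist_right x).hausdorffMeasure_image_le zero_le_one K

lemma measure_eq_zero_of_hausdorffMeasure_one_ne_top (hμ : μ ≪ μH[2]) (hK : μH[1] K ≠ ⊤) :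
    μ K = 0 :=
  hμ ((Measure.hausdorffMeasure_zero_or_top one_lt_two K).resolve_right hK)

lemma interior_eq_empty_of_hausdorffMeasure_one_ne_top [μ.IsOpenPosMeasure] (hμ : μ ≪ μH[2])
    (hK : μH[1] K ≠ ⊤) : interior K = ∅ :=
  μ.interior_eq_empty_of_null (measure_eq_zero_of_hausdorffMeasure_one_ne_top hμ hK)

lemma hausdorffMeasure_frontier_sdiff {E W : Set X} (hW : IsOpen W) (hE : IsClosed E) (hEW : E ⊆ W)
    (hE₀ : interior E = ∅) : μH[1] (frontier (W \ E)) = μH[1] (frontier W) + μH[1] E := by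
  rw [frontier_sdiff_of_interior_eq_empty hW hE hEW hE₀,
    measure_union (disjoint_frontier_of_isOpen_of_subset hW hEW) hE.measurableSet]

lemma IsRegion.hausdorffMeasure_frontier_image_sdiff {Y : Type*} [TopologicalSpace Y]
    {e : OpenPartialHomeomorph Y X} {E W : Set Y} (hW : IsRegion e.source W) (hE : IsCompact E)
    (hEW : E ⊆ W) (hE₀ : interior E = ∅) [T2Space Y] :
    μH[1] (frontier (e '' (W \ E))) = μH[1] (e '' frontier W) + μH[1] (e '' E) := by
  rw [hW.frontier_image_sdiff hE.isClosed hEW hE₀, measure_union]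
  · exact (disjoint_frontier_of_isOpen_of_subset hW.isOpen hEW).image e.injOn hW.frontier_subset
      (hEW.trans hW.subset)
  · exact (hE.image_of_continuousOn (e.continuousOn.mono (hEW.trans hW.subset))).measurableSet

/-- The Polsby-Popper score `4π · area / perimeter²` in a metric space, for an arbitrary measure
`μ` of area; perimeter is the one-dimensional Hausdorff measure of the frontier. -/
noncomputable def polsbyPopper (μ : Measure X) (A : Set X) : ENNReal :=
  ENNReal.ofReal (4 * π) * μ A / μH[1] (frontier A) ^ 2

lemma polsbyPopper_lt_of_measure_lt (hμ : μ A < μ B)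
    (hlen : μH[1] (frontier B) ≤ μH[1] (frontier A)) (hA : μH[1] (frontier A) ≠ 0)
    (hB : μH[1] (frontier B) ≠ ⊤) : polsbyPopper μ A < polsbyPopper μ B := by
  have hμ' : ENNReal.ofReal (4 * π) * μ A < ENNReal.ofReal (4 * π) * μ B :=
    (ENNReal.mul_lt_mul_iff_right (by simp [pi_pos]) (by finiteness)).2 hμ
  unfold polsbyPopper
  rcases eq_or_ne (μH[1] (frontier A)) ⊤ with htop | htop
  · simpa [htop] using ENNReal.div_pos (ne_bot_of_gt hμ') (by finiteness)
  · calc ENNReal.ofReal (4 * π) * μ A / μH[1] (frontier A) ^ 2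
        < ENNReal.ofReal (4 * π) * μ B / μH[1] (frontier A) ^ 2 :=
          ENNReal.div_lt_div_right (pow_ne_zero 2 hA) (by finiteness) hμ'
      _ ≤ ENNReal.ofReal (4 * π) * μ B / μH[1] (frontier B) ^ 2 := by gcongr

lemma polsbyPopper_lt_of_hausdorffMeasure_frontier_lt (hμ : μ A ≤ μ B) (hB₀ : μ B ≠ 0)
    (hB : μ B ≠ ⊤) (hlen : μH[1] (frontier B) < μH[1] (frontier A)) :
    polsbyPopper μ A < polsbyPopper μ B :=
  calc polsbyPopper μ A ≤ ENNReal.ofReal (4 * π) * μ B / μH[1] (frontier A) ^ 2 := by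
        unfold polsbyPopper
        gcongr
    _ < polsbyPopper μ B := ENNReal.div_lt_div_left (by simp [hB₀, pi_pos]) (by finiteness)
        (ENNReal.pow_lt_pow_left two_ne_zero hlen)

lemma polsbyPopper_pos (hA : μ A ≠ 0) (hlen : μH[1] (frontier A) ≠ ⊤) : 0 < polsbyPopper μ A :=
  ENNReal.div_pos (by simp [hA, pi_pos]) (by finiteness)

lemma polsbyPopper_eq_zero (hA : μH[1] (frontier A) = ⊤) : polsbyPopper μ A = 0 := by
  simp [polsbyPopper, hA]

lemma measure_mul_sq_lt_of_polsbyPopper_lt {m p d : ENNReal} (hA : μ A ≠ 0) (hp : p ≠ ⊤)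
    (hB : μ B ≤ μ A + m) (hlenA : μH[1] (frontier A) ≤ p) (hlenB : p + d ≤ μH[1] (frontier B))
    (h : polsbyPopper μ A < polsbyPopper μ B) : μ A * d ^ 2 < m * p ^ 2 := by
  by_contra! hle
  refine h.not_ge ?_
  rcases eq_or_ne p 0 with rfl | hp0
  · rw [polsbyPopper.eq_def μ A, nonpos_iff_eq_zero.1 hlenA, zero_pow two_ne_zero,
      ENNReal.div_zero (by simp [hA, pi_pos])]
    exact le_top
  have hpq : μ B * p ^ 2 ≤ μ A * (p + d) ^ 2 :=
    calc μ B * p ^ 2 ≤ (μ A + m) * p ^ 2 := by gcongr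
      _ = μ A * p ^ 2 + m * p ^ 2 := by ring
      _ ≤ μ A * p ^ 2 + μ A * d ^ 2 := by gcongr
      _ ≤ μ A * p ^ 2 + μ A * d ^ 2 + 2 * μ A * p * d := le_self_add
      _ = μ A * (p + d) ^ 2 := by ring
  calc polsbyPopper μ B ≤ ENNReal.ofReal (4 * π) * μ B / (p + d) ^ 2 := by
        unfold polsbyPopper
        gcongr
    _ ≤ ENNReal.ofReal (4 * π) * μ A / p ^ 2 := by
        refine ENNReal.div_le_of_le_mul ?_
        rw [← ENNReal.mul_div_right_comm, ENNReal.le_div_iff_mul_le (by simp [hp0]) (by simp [hp]),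
          mul_assoc, mul_assoc]
        gcongr
    _ ≤ polsbyPopper μ A := by
        unfold polsbyPopper
        gcongr

lemma volume_absolutelyContinuous_hausdorffMeasure_two :
    (volume : Measure (EuclideanSpace ℝ (Fin 2))) ≪ μH[2] := by
  have := isAddHaarMeasure_hausdorffMeasure (E := EuclideanSpace ℝ (Fin 2))
  rw [finrank_euclideanSpace_fin, Nat.cast_ofNat] at this
  exact Measure.absolutelyContinuous_isAddHaarMeasure _ _

end Score

section ThinNeighbourhood

lemma exists_cover_tsum_ediam_lt {X : Type*} [MetricSpace X] [MeasurableSpace X] [BorelSpace X]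
    {T : Set X} (hlen : μH[1] T ≠ ⊤) {δ : ℝ} (hδ : 0 < δ) {ε : ENNReal} (hε : ε ≠ 0) :
    ∃ t : ℕ → Set X, T ⊆ ⋃ n, t n ∧ (∀ n, ediam (t n) ≤ ENNReal.ofReal δ) ∧
      ∑' n, ediam (t n) < μH[1] T + ε := by
  have hinf : (⨅ (t : ℕ → Set X) (_ : T ⊆ ⋃ n, t n) (_ : ∀ n, ediam (t n) ≤ ENNReal.ofReal δ),
      ∑' n, ⨆ _ : (t n).Nonempty, ediam (t n) ^ (1 : ℝ)) < μH[1] T + ε := by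
    refine lt_of_le_of_lt ?_ (ENNReal.lt_add_right hlen hε)
    rw [Measure.hausdorffMeasure_apply]
    exact le_iSup₂_of_le (ENNReal.ofReal δ) (by simpa using hδ) le_rfl
  have hediam (s : Set X) : ⨆ _ : s.Nonempty, ediam s ^ (1 : ℝ) = ediam s := by
    rcases s.eq_empty_or_nonempty with rfl | hs <;> simp [*]
  simpa only [iInf_lt_iff, exists_prop, hediam] using hinf

lemma exists_finset_ball_cover_sum_radius_le {X : Type*} [Nonempty X] [MetricSpace X]
    [MeasurableSpace X] [BorelSpace X] {T : Set X} (hT : IsCompact T) (hlen : μH[1] T ≠ ⊤)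
    {δ : ℝ} (hδ : 0 < δ) {ε : ENNReal} (hε : ε ≠ 0) :
    ∃ (F : Finset ℕ) (x : ℕ → X) (r : ℕ → ℝ), (∀ n ∈ F, x n ∈ T ∧ 0 < r n ∧ r n ≤ δ) ∧
      T ⊆ ⋃ n ∈ F, ball (x n) (r n) ∧ ∑ n ∈ F, ENNReal.ofReal (r n) ≤ μH[1] T + ε := by
  obtain ⟨t, hTt, htδ, hsum⟩ := exists_cover_tsum_ediam_lt hlen (half_pos hδ)
    (ENNReal.half_pos hε).ne'
  obtain ⟨η, hη, hηsum⟩ := ENNReal.exists_pos_sum_of_countable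
    (ε := min (ε / 2) (ENNReal.ofReal (δ / 2))) (by simp [hε, hδ]) ℕ
  have hfin (n) : ediam (t n) ≠ ⊤ := ne_top_of_le_ne_top (by finiteness) (htδ n)
  have hdiam (n) : (ediam (t n)).toReal ≤ δ / 2 :=
    ENNReal.toReal_le_of_le_ofReal (half_pos hδ).le (htδ n)
  have hηδ (n) : (η n : ℝ) ≤ δ / 2 := ENNReal.toReal_le_of_le_ofReal (half_pos hδ).le
    ((ENNReal.le_tsum n).trans (hηsum.le.trans (min_le_right _ _)))
  have hsel (n) : ∃ x, (t n ∩ T).Nonempty → x ∈ t n ∩ T := by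
    by_cases hn : (t n ∩ T).Nonempty
    exacts [⟨hn.some, fun _ => hn.some_mem⟩, ⟨Classical.arbitrary X, fun h => absurd h hn⟩]
  choose x hx using hsel
  obtain ⟨F, hFT, hFfin, hTF⟩ := hT.elim_finite_subcover_image (b := {n | (t n ∩ T).Nonempty})
    (c := fun n => ball (x n) ((ediam (t n)).toReal + η n)) (fun n _ => isOpen_ball) (by
      intro y hy
      obtain ⟨n, hn⟩ := Set.mem_iUnion.1 (hTt hy)
      have hnT : (t n ∩ T).Nonempty := ⟨y, hn, hy⟩
      have hdist : dist y (x n) ≤ (ediam (t n)).toReal := by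
        rw [dist_edist]
        exact ENNReal.toReal_mono (hfin n) (edist_le_ediam_of_mem hn (hx n hnT).1)
      exact Set.mem_biUnion hnT (hdist.trans_lt (lt_add_of_pos_right _ (hη n))))
  lift F to Finset ℕ using hFfin
  refine ⟨F, x, fun n => (ediam (t n)).toReal + η n, fun n hn => ⟨(hx n (hFT hn)).2, ?_, ?_⟩,
    by simpa using hTF, ?_⟩
  · exact add_pos_of_nonneg_of_pos ENNReal.toReal_nonneg (hη n)
  · linarith [hdiam n, hηδ n]
  · calc ∑ n ∈ F, ENNReal.ofReal ((ediam (t n)).toReal + η n)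
        = ∑ n ∈ F, ediam (t n) + ∑ n ∈ F, (η n : ENNReal) := by
          simp_rw [ENNReal.ofReal_add ENNReal.toReal_nonneg (η _).coe_nonneg,
            ENNReal.ofReal_toReal (hfin _), ENNReal.ofReal_coe_nnreal, Finset.sum_add_distrib]
      _ ≤ (μH[1] T + ε / 2) + ε / 2 := add_le_add ((ENNReal.sum_le_tsum F).trans hsum.le)
          ((ENNReal.sum_le_tsum F).trans (hηsum.le.trans (min_le_left _ _)))
      _ = μH[1] T + ε := by rw [add_assoc, ENNReal.add_halves]

lemma frontier_biUnion_closedBall_subset {X ι : Type*} [PseudoMetricSpace X] (F : Finset ι)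
    (x : ι → X) (r : ι → ℝ) :
    frontier (⋃ n ∈ F, closedBall (x n) (r n)) ⊆ ⋃ n ∈ F, sphere (x n) (r n) := by
  rw [(isClosed_biUnion_finset fun n _ => isClosed_closedBall).frontier_eq]
  rintro y ⟨hy, hyint⟩
  obtain ⟨n, hn, hyn⟩ := Set.mem_iUnion₂.1 hy
  refine Set.mem_biUnion hn (le_antisymm hyn (not_lt.1 fun hlt => hyint ?_))
  exact interior_mono (Set.subset_biUnion_of_mem (u := fun n => closedBall (x n) (r n)) hn)
    (ball_subset_interior_closedBall hlt)

lemma hausdorffMeasure_sphere_le (x : EuclideanSpace ℝ (Fin 2)) {r : ℝ} (hr : 0 ≤ r) :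
    μH[1] (sphere x r) ≤ ENNReal.ofReal r * ENNReal.ofReal (2 * π) := by
  let f := Complex.orthonormalBasisOneI.repr
  calc μH[1] (sphere x r) = μH[1] (circleMap (f.symm x) r '' Set.Ioc 0 (2 * π)) := by
        rw [image_circleMap_Ioc, abs_of_nonneg hr, ← f.isometry.hausdorffMeasure_image (by simp),
          f.image_sphere, f.apply_symm_apply]
    _ ≤ ENNReal.ofReal r * μH[1] (Set.Ioc 0 (2 * π)) := by
        simpa [abs_of_nonneg hr, Real.nnabs_of_nonneg hr, ENNReal.ofReal] using
          (lipschitzWith_circleMap (f.symm x) r).hausdorffMeasure_image_le zero_le_one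
            (Set.Ioc 0 (2 * π))
    _ = ENNReal.ofReal r * ENNReal.ofReal (2 * π) := by
        rw [hausdorffMeasure_real, Real.volume_Ioc, sub_zero]

lemma exists_compact_neighborhood_volume_le {T O : Set (EuclideanSpace ℝ (Fin 2))}
    (hT : IsCompact T) (hlen : μH[1] T ≠ ⊤) (hO : IsOpen O) (hTO : T ⊆ O) {ε : ENNReal}
    (hε : ε ≠ 0) :
    ∃ N, IsCompact N ∧ T ⊆ interior N ∧ N ⊆ O ∧
      μH[1] (frontier N) ≤ (μH[1] T + 1) * ENNReal.ofReal (2 * π) ∧ volume N ≤ ε := by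
  obtain ⟨δ₀, hδ₀, hthick⟩ := hT.exists_cthickening_subset_open hO hTO
  obtain ⟨δ₁, hδ₁, hδ₁ε⟩ := ENNReal.exists_nnreal_pos_mul_lt
    (a := (μH[1] T + 1) * ENNReal.ofReal π) (by finiteness) hε
  obtain ⟨F, x, r, hxr, hTF, hsum⟩ := exists_finset_ball_cover_sum_radius_le hT hlen
    (lt_min hδ₀ (NNReal.coe_pos.2 hδ₁)) one_ne_zero
  refine ⟨⋃ n ∈ F, closedBall (x n) (r n), F.isCompact_biUnion fun n _ => isCompact_closedBall _ _,
    hTF.trans ?_, Set.iUnion₂_subset fun n hn => ?_, ?_, ?_⟩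
  · exact interior_maximal (Set.iUnion₂_mono fun n _ => ball_subset_closedBall)
      (isOpen_biUnion fun n _ => isOpen_ball)
  · exact (closedBall_subset_cthickening (hxr n hn).1 _).trans <|
      (cthickening_mono ((hxr n hn).2.2.trans (min_le_left _ _)) T).trans hthick
  · calc μH[1] (frontier (⋃ n ∈ F, closedBall (x n) (r n)))
        ≤ ∑ n ∈ F, μH[1] (sphere (x n) (r n)) :=
          (measure_mono (frontier_biUnion_closedBall_subset F x r)).trans
            (measure_biUnion_finset_le _ _)
      _ ≤ ∑ n ∈ F, ENNReal.ofReal (r n) * ENNReal.ofReal (2 * π) :=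
          Finset.sum_le_sum fun n hn => hausdorffMeasure_sphere_le (x n) (hxr n hn).2.1.le
      _ ≤ (μH[1] T + 1) * ENNReal.ofReal (2 * π) := by
          rw [← Finset.sum_mul]
          gcongr
  · calc volume (⋃ n ∈ F, closedBall (x n) (r n))
        ≤ ∑ n ∈ F, volume (closedBall (x n) (r n)) := measure_biUnion_finset_le _ _
      _ ≤ ∑ n ∈ F, ENNReal.ofReal (r n) * (δ₁ * ENNReal.ofReal π) := by
          refine Finset.sum_le_sum fun n hn => ?_
          rw [EuclideanSpace.volume_closedBall_fin_two, pow_two, mul_assoc,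
            ← ENNReal.ofReal_coe_nnreal]
          gcongr
          exact (hxr n hn).2.2.trans (min_le_right _ _)
      _ ≤ (μH[1] T + 1) * (δ₁ * ENNReal.ofReal π) := by
          rw [← Finset.sum_mul]
          gcongr
      _ = δ₁ * ((μH[1] T + 1) * ENNReal.ofReal π) := by ring
      _ ≤ ε := hδ₁ε.le

end ThinNeighbourhood

section Comparison

variable {X Y : Type*} [MetricSpace X] [MetricSpace Y] [MeasurableSpace Y] [BorelSpace Y]
  {ν : Measure Y} {e : OpenPartialHomeomorph X Y} {U E K N T V W : Set X}

lemma interior_eq_empty_of_hausdorffMeasure_one_image_ne_top [ν.IsOpenPosMeasure]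
    (hν : ν ≪ μH[2]) (hK : K ⊆ e.source) (hlen : μH[1] (e '' K) ≠ ⊤) : interior K = ∅ := by
  have hopen : IsOpen (e '' interior K) :=
    e.isOpen_image_of_subset_source isOpen_interior (interior_subset.trans hK)
  have hsub : e '' interior K ⊆ interior (e '' K) :=
    interior_maximal (Set.image_mono interior_subset) hopen
  rw [interior_eq_empty_of_hausdorffMeasure_one_ne_top hν hlen] at hsub
  exact Set.image_eq_empty.1 (Set.subset_empty_iff.1 hsub)

lemma measure_image_sdiff_frontier_sdiff_le (hν : ν ≪ μH[2]) (hKlen : μH[1] (e '' K) ≠ ⊤) :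
    ν (e '' ((W \ frontier N) \ T)) ≤ ν (e '' ((W \ N) \ K)) + ν (e '' N) :=
  calc ν (e '' ((W \ frontier N) \ T)) ≤ ν (e '' ((W \ N) \ K) ∪ e '' N ∪ e '' K) := by
        simp_rw [← Set.image_union]
        refine measure_mono (Set.image_mono fun x hx => ?_)
        by_cases hxN : x ∈ N
        · exact .inl (.inr hxN)
        · by_cases hxK : x ∈ K
          exacts [.inr hxK, .inl (.inl ⟨⟨hx.1.1, hxN⟩, hxK⟩)]
    _ ≤ ν (e '' ((W \ N) \ K) ∪ e '' N) + ν (e '' K) := measure_union_le _ _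
    _ = ν (e '' ((W \ N) \ K) ∪ e '' N) := by
        rw [measure_eq_zero_of_hausdorffMeasure_one_ne_top hν hKlen, add_zero]
    _ ≤ ν (e '' ((W \ N) \ K)) + ν (e '' N) := measure_union_le _ _

variable [MeasurableSpace X] [BorelSpace X] {μ : Measure X}

/-- The projection `e` is strictly increasing in the score on pairs of nested regions; the score
uses the area measures `μ` on the source and `ν` on the target. -/
def PreservesPolsbyPopper (μ : Measure X) (ν : Measure Y) (e : OpenPartialHomeomorph X Y) : Prop :=
  ∀ A B, IsRegion e.source A → IsRegion e.source B → A ⊆ B →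
    polsbyPopper μ A < polsbyPopper μ B → polsbyPopper ν (e '' A) < polsbyPopper ν (e '' B)

-- Cutting a region along `C` leaves its area alone and lengthens its frontier, so the uncut region
-- scores more, and the score of its image cannot vanish.
lemma PreservesPolsbyPopper.hausdorffMeasure_image_ne_top [μ.IsOpenPosMeasure]
    [IsFiniteMeasureOnCompacts μ] (h : PreservesPolsbyPopper μ ν e) (hμ : μ ≪ μH[2])
    (hW : IsRegion e.source W) (hWlen : μH[1] (frontier W) ≠ ⊤) (hT : IsCompact T) (hTW : T ⊆ W)
    (hTlen : μH[1] T ≠ ⊤) {C : Set X} (hC : IsCompact C) (hCW : C ⊆ W) (hTC : Disjoint T C)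
    (hC₀ : μH[1] C ≠ 0) (hClen : μH[1] C ≠ ⊤) :
    μH[1] (e '' frontier W) ≠ ⊤ ∧ μH[1] (e '' T) ≠ ⊤ := by
  have hTint := interior_eq_empty_of_hausdorffMeasure_one_ne_top hμ hTlen
  have hCint := interior_eq_empty_of_hausdorffMeasure_one_ne_top hμ hClen
  have hWT := hW.sdiff_of_interior_eq_empty hT.isClosed hTint
  have hlen : μH[1] (frontier (W \ T)) < μH[1] (frontier ((W \ T) \ C)) := by
    rw [hausdorffMeasure_frontier_sdiff hWT.isOpen hC.isClosed
      (Set.subset_sdiff.2 ⟨hCW, hTC.symm⟩) hCint]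
    refine ENNReal.lt_add_right ?_ hC₀
    rw [hausdorffMeasure_frontier_sdiff hW.isOpen hT.isClosed hTW hTint]
    finiteness
  have hlt := h _ _ (hWT.sdiff_of_interior_eq_empty hC.isClosed hCint) hWT Set.sdiff_subset <|
    polsbyPopper_lt_of_hausdorffMeasure_frontier_lt (measure_mono Set.sdiff_subset)
      hWT.measure_ne_zero hWT.measure_ne_top hlen
  have hfin : μH[1] (frontier (e '' (W \ T))) ≠ ⊤ := fun htop =>
    not_lt_zero (hlt.trans_eq (polsbyPopper_eq_zero htop))
  rwa [hW.hausdorffMeasure_frontier_image_sdiff hT hTW hTint, ENNReal.add_ne_top] at hfin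

lemma IsRegion.polsbyPopper_sdiff_pos [μ.IsOpenPosMeasure] (hW : IsRegion U W)
    (hWlen : μH[1] (frontier W) ≠ ⊤) (hE : IsCompact E) (hEW : E ⊆ W) (hElen : μH[1] E ≠ ⊤)
    (hE₀ : interior E = ∅) : 0 < polsbyPopper μ (W \ E) := by
  refine polsbyPopper_pos (hW.sdiff_of_interior_eq_empty hE.isClosed hE₀).measure_ne_zero ?_
  rw [hausdorffMeasure_frontier_sdiff hW.isOpen hE.isClosed hEW hE₀]
  finiteness

lemma div_div_add_one_sq_lt {a m : ENNReal} (ha₀ : a ≠ 0) (ha : a ≠ ⊤) (hm : m ≠ ⊤) :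
    m / (m / a + 1) ^ 2 < a := by
  by_contra! hle
  refine (ENNReal.lt_add_right hm ha₀).not_ge ?_
  calc m + a = a * (m / a + 1) := by rw [mul_add, ENNReal.mul_div_cancel ha₀ ha, mul_one]
    _ ≤ a * (m / a + 1) ^ 2 := by
        gcongr
        exact le_self_pow le_add_self two_ne_zero
    _ ≤ m := ENNReal.mul_le_of_le_div hle

-- If `K` had infinite length then `V \ K` would score zero, hence less than `W \ E` for every
-- `E` of finite length, although the image of `W \ E` scores arbitrarily little.
lemma PreservesPolsbyPopper.hausdorffMeasure_ne_top_of_image [μ.IsOpenPosMeasure]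
    [ν.IsOpenPosMeasure] [IsFiniteMeasureOnCompacts ν] (h : PreservesPolsbyPopper μ ν e)
    (hμ : μ ≪ μH[2]) (hν : ν ≪ μH[2]) (hW : IsRegion e.source W)
    (hWlen : μH[1] (frontier W) ≠ ⊤) (hV : IsRegion e.source V) (hVW : V ⊆ W)
    (hVlen : μH[1] (e '' frontier V) ≠ ⊤)
    (hlong : ∀ L : ENNReal, L ≠ ⊤ → ∃ E ⊆ W, IsCompact E ∧ Disjoint E V ∧ μH[1] E ≠ ⊤ ∧
      L ≤ μH[1] (e '' E))
    (hK : IsCompact K) (hKV : K ⊆ V) (hKlen : μH[1] (e '' K) ≠ ⊤) : μH[1] K ≠ ⊤ := by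
  intro htop
  have hK₀ := interior_eq_empty_of_hausdorffMeasure_one_image_ne_top hν (hKV.trans hV.subset) hKlen
  have hA := hV.sdiff_of_interior_eq_empty hK.isClosed hK₀
  have hAzero : polsbyPopper μ (V \ K) = 0 := by
    refine polsbyPopper_eq_zero ?_
    rw [hausdorffMeasure_frontier_sdiff hV.isOpen hK.isClosed hKV hK₀, htop, add_top]
  set α := polsbyPopper ν (e '' (V \ K))
  have hα₀ : α ≠ 0 := by
    refine (polsbyPopper_pos hA.measure_image_ne_zero ?_).ne'
    rw [hV.hausdorffMeasure_frontier_image_sdiff hK hKV hK₀]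
    finiteness
  set m := ENNReal.ofReal (4 * π) * ν (e '' W)
  have hm : m ≠ ⊤ := ENNReal.mul_ne_top (by finiteness) hW.measure_image_ne_top
  obtain ⟨E, hEW, hE, hEV, hElen, hlongE⟩ := hlong (m / α + 1)
    (ENNReal.add_ne_top.2 ⟨ENNReal.div_ne_top hm hα₀, ENNReal.one_ne_top⟩)
  have hE₀ : interior E = ∅ := interior_eq_empty_of_hausdorffMeasure_one_ne_top hμ hElen
  have hlt : α < polsbyPopper ν (e '' (W \ E)) :=
    h _ _ hA (hW.sdiff_of_interior_eq_empty hE.isClosed hE₀)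
      (fun x hx => ⟨hVW hx.1, fun hxE => Set.disjoint_left.1 hEV hxE hx.1⟩)
      (hAzero.symm ▸ hW.polsbyPopper_sdiff_pos hWlen hE hEW hElen hE₀)
  refine (div_div_add_one_sq_lt hα₀ (ne_top_of_lt hlt) hm).not_ge (hlt.le.trans ?_)
  unfold polsbyPopper
  rw [hW.hausdorffMeasure_frontier_image_sdiff hE hEW hE₀]
  exact ENNReal.div_le_div
    (mul_le_mul_right (measure_mono (Set.image_mono Set.sdiff_subset)) _)
    (pow_le_pow_left' (hlongE.trans le_add_self) 2)

lemma IsRegion.measure_sdiff_sdiff_lt [μ.IsOpenPosMeasure] [IsFiniteMeasureOnCompacts μ]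
    (hμ : μ ≪ μH[2]) (hW : IsRegion U W) (hN : IsClosed N) (hNW : N ⊆ W) (hT : IsClosed T)
    (hTN : T ⊆ interior N) (hNne : (interior N).Nonempty) (hTlen : μH[1] T ≠ ⊤) :
    μ ((W \ N) \ K) < μ ((W \ frontier N) \ T) := by
  have hgain : μ (interior N \ T) ≠ 0 := by
    refine ((isOpen_interior.sdiff hT).measure_pos μ (Set.sdiff_nonempty.2 fun hsub => ?_)).ne'
    have hT₀ := interior_eq_empty_of_hausdorffMeasure_one_ne_top hμ hTlen
    exact (interior_maximal hsub isOpen_interior |>.trans_eq hT₀).not_gt hNne.empty_ssubset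
  have hdisj : Disjoint ((W \ N) \ K) (interior N \ T) :=
    Set.disjoint_left.2 fun x hx hx' => hx.1.2 (interior_subset hx'.1)
  calc μ ((W \ N) \ K) < μ ((W \ N) \ K) + μ (interior N \ T) :=
        ENNReal.lt_add_right (measure_ne_top_of_subset
          (Set.sdiff_subset.trans Set.sdiff_subset) hW.measure_ne_top) hgain
    _ = μ ((W \ N) \ K ∪ interior N \ T) :=
        (measure_union hdisj (isOpen_interior.sdiff hT).measurableSet).symm
    _ ≤ μ ((W \ frontier N) \ T) := by
        refine measure_mono (Set.union_subset (fun x hx => ?_) fun x hx => ?_)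
        · exact ⟨⟨hx.1.1, fun h => hx.1.2 (hN.frontier_subset h)⟩,
            fun h => hx.1.2 (interior_subset (hTN h))⟩
        · exact ⟨⟨hNW (interior_subset hx.1), fun h => h.2 hx.1⟩, hx.2⟩

lemma IsRegion.polsbyPopper_sdiff_sdiff_lt [μ.IsOpenPosMeasure] [IsFiniteMeasureOnCompacts μ]
    (hμ : μ ≪ μH[2]) (hW : IsRegion U W) (hW₀ : μH[1] (frontier W) ≠ 0) (hN : IsClosed N)
    (hNW : N ⊆ W) (hNlen : μH[1] (frontier W ∪ frontier N) ≠ ⊤) (hT : IsClosed T)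
    (hTN : T ⊆ interior N) (hNne : (interior N).Nonempty) (hK : IsClosed K) (hKWN : K ⊆ W \ N)
    (hKlen : μH[1] K ≠ ⊤) (hlen : μH[1] T ≤ μH[1] K) :
    polsbyPopper μ ((W \ N) \ K) < polsbyPopper μ ((W \ frontier N) \ T) := by
  have hTlen := ne_top_of_le_ne_top hKlen hlen
  have hlenA : μH[1] (frontier ((W \ N) \ K)) = μH[1] (frontier W ∪ frontier N) + μH[1] K := by
    rw [hausdorffMeasure_frontier_sdiff (hW.isOpen.sdiff hN) hK hKWN
      (interior_eq_empty_of_hausdorffMeasure_one_ne_top hμ hKlen),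
      frontier_sdiff_of_isClosed_subset_isOpen hW.isOpen hN hNW]
  have hlenB : μH[1] (frontier ((W \ frontier N) \ T)) =
      μH[1] (frontier W ∪ frontier N) + μH[1] T := by
    rw [hausdorffMeasure_frontier_sdiff (hW.isOpen.sdiff isClosed_frontier) hT
      (subset_sdiff_frontier hNW hTN) (interior_eq_empty_of_hausdorffMeasure_one_ne_top hμ hTlen),
      frontier_sdiff_frontier hW.isOpen hN hNW]
  refine polsbyPopper_lt_of_measure_lt (hW.measure_sdiff_sdiff_lt hμ hN hNW hT hTN hNne hTlen)
    ?_ ?_ ?_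
  · rw [hlenA, hlenB]
    gcongr
  · rw [hlenA]
    exact fun h => hW₀ (measure_mono_null Set.subset_union_left (add_eq_zero.1 h).1)
  · rw [hlenB]
    finiteness

-- Both regions have the frontiers of `W` and `N` in their perimeter; the first lacks `N` and is cut
-- along `K`, the second is cut along `T` instead.
lemma PreservesPolsbyPopper.measure_image_mul_sq_lt [μ.IsOpenPosMeasure]
    [IsFiniteMeasureOnCompacts μ] [ν.IsOpenPosMeasure] (h : PreservesPolsbyPopper μ ν e)
    (hμ : μ ≪ μH[2]) (hν : ν ≪ μH[2]) (hW : IsRegion e.source W)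
    (hW₀ : μH[1] (frontier W) ≠ 0) (hN : IsCompact N) (hNW : N ⊆ W) (hWN : (W \ N).Nonempty)
    (hNlen : μH[1] (frontier W ∪ frontier N) ≠ ⊤)
    (hNlen' : μH[1] (e '' (frontier W ∪ frontier N)) ≠ ⊤) (hT : IsCompact T)
    (hTN : T ⊆ interior N) (hK : IsCompact K) (hKWN : K ⊆ W \ N) (hKlen : μH[1] K ≠ ⊤)
    (hlen : μH[1] T ≤ μH[1] K) (hlt : μH[1] (e '' K) < μH[1] (e '' T)) :
    ν (e '' ((W \ N) \ K)) * (μH[1] (e '' T) - μH[1] (e '' K)) ^ 2 <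
      ν (e '' N) * (μH[1] (e '' (frontier W ∪ frontier N)) + μH[1] (e '' K)) ^ 2 := by
  have hK₀ := interior_eq_empty_of_hausdorffMeasure_one_ne_top hμ hKlen
  have hT₀ := interior_eq_empty_of_hausdorffMeasure_one_ne_top hμ (ne_top_of_le_ne_top hKlen hlen)
  have hNne : (interior N).Nonempty := by
    refine Set.Nonempty.mono hTN (Set.nonempty_iff_ne_empty.2 fun hT => ?_)
    simp [hT] at hlt
  have hV := hW.sdiff hN.isClosed hWN
  have hV' := hW.sdiff_of_interior_eq_empty isClosed_frontier (interior_frontier hN.isClosed)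
  have hA := hV.sdiff_of_interior_eq_empty hK.isClosed hK₀
  have hB := hV'.sdiff_of_interior_eq_empty hT.isClosed hT₀
  have hAB : (W \ N) \ K ⊆ (W \ frontier N) \ T := fun x hx =>
    ⟨⟨hx.1.1, fun h => hx.1.2 (hN.isClosed.frontier_subset h)⟩,
      fun h => hx.1.2 (interior_subset (hTN h))⟩
  refine measure_mul_sq_lt_of_polsbyPopper_lt hA.measure_image_ne_zero
    (ENNReal.add_ne_top.2 ⟨hNlen', ne_top_of_lt hlt⟩)
    (measure_image_sdiff_frontier_sdiff_le hν (ne_top_of_lt hlt)) ?_ ?_ <| h _ _ hA hB hAB <|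
      hW.polsbyPopper_sdiff_sdiff_lt hμ hW₀ hN.isClosed hNW hNlen hT.isClosed hTN hNne
        hK.isClosed hKWN hKlen hlen
  · rw [hV.hausdorffMeasure_frontier_image_sdiff hK hKWN hK₀,
      frontier_sdiff_of_isClosed_subset_isOpen hW.isOpen hN.isClosed hNW]
  · rw [hV'.hausdorffMeasure_frontier_image_sdiff hT (subset_sdiff_frontier hNW hTN) hT₀,
      frontier_sdiff_frontier hW.isOpen hN.isClosed hNW, add_assoc, add_tsub_cancel_of_le hlt.le]

end Comparison

section LengthComparison

variable {X : Type*} [MetricSpace X] {o q : X}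

lemma exists_ne_zero_mul_sq_le {a d M : ENNReal} (ha : a ≠ 0) (hd : d ≠ 0) (hM : M ≠ ⊤) :
    ∃ ε ≠ 0, ε * M ^ 2 ≤ a * d ^ 2 := by
  refine ⟨a * d ^ 2 / (M + 1) ^ 2, ENNReal.div_ne_zero.2 ⟨by positivity, by finiteness⟩, ?_⟩
  calc a * d ^ 2 / (M + 1) ^ 2 * M ^ 2 ≤ a * d ^ 2 / (M + 1) ^ 2 * (M + 1) ^ 2 := by
        gcongr
        exact le_self_add
    _ ≤ a * d ^ 2 := ENNReal.mul_le_of_le_div le_rfl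

lemma exists_compact_neighborhood_volume_image_le {X : Type*} [TopologicalSpace X] [T2Space X]
    {e : OpenPartialHomeomorph X (EuclideanSpace ℝ (Fin 2))} {T O : Set X} (hT : IsCompact T)
    (hlen : μH[1] (e '' T) ≠ ⊤) (hO : IsOpen O) (hOe : O ⊆ e.source) (hTO : T ⊆ O)
    {ε : ENNReal} (hε : ε ≠ 0) :
    ∃ N, IsCompact N ∧ T ⊆ interior N ∧ N ⊆ O ∧
      μH[1] (e '' frontier N) ≤ (μH[1] (e '' T) + 1) * ENNReal.ofReal (2 * π) ∧
      volume (e '' N) ≤ ε := by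
  obtain ⟨N, hN, hTN, hNO, hNlen, hNvol⟩ := exists_compact_neighborhood_volume_le
    (hT.image_of_continuousOn (e.continuousOn.mono (hTO.trans hOe))) hlen
    (e.isOpen_image_of_subset_source hO hOe) (Set.image_mono hTO) hε
  have hNe : N ⊆ e.target := hNO.trans ((Set.image_mono hOe).trans e.image_source_eq_target.le)
  have himage : e '' (e.symm '' N) = N := e.image_symm_image_of_subset_target hNe
  have hc : IsCompact (e.symm '' N) := hN.image_of_continuousOn (e.symm.continuousOn.mono hNe)
  have hsub : e.symm '' N ⊆ O :=
    (Set.image_mono hNO).trans (e.toPartialEquiv.symm_image_image_of_subset_source hOe).le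
  have hfront : e '' frontier (e.symm '' N) = frontier N := by
    rw [← frontier_image_of_isCompact_closure, himage]
    · rwa [hc.isClosed.closure_eq]
    · rw [hc.isClosed.closure_eq]
      exact hsub.trans hOe
  refine ⟨e.symm '' N, hc, fun x hx => ?_, hsub, by rwa [hfront], by rwa [himage]⟩
  have hopen : IsOpen (e.symm '' interior N) :=
    e.symm.isOpen_image_of_subset_source isOpen_interior (interior_subset.trans hNe)
  exact interior_maximal (Set.image_mono interior_subset) hopen
    ⟨e x, hTN ⟨x, hx, rfl⟩, e.left_inv (hOe (hTO hx))⟩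

lemma PreservesPolsbyPopper.hausdorffMeasure_image_le_of_disjoint [MeasurableSpace X]
    [BorelSpace X] {μ : Measure X} [μ.IsOpenPosMeasure] [IsFiniteMeasureOnCompacts μ]
    {e : OpenPartialHomeomorph X (EuclideanSpace ℝ (Fin 2))} {K T V W : Set X}
    (h : PreservesPolsbyPopper μ volume e) (hμ : μ ≪ μH[2]) (hW : IsRegion e.source W)
    (hW₀ : μH[1] (frontier W) ≠ 0) (hWlen : μH[1] (frontier W) ≠ ⊤)
    (hWlen' : μH[1] (e '' frontier W) ≠ ⊤) (hV : IsOpen V) (hVW : V ⊆ W)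
    (hWV : (W \ closure V).Nonempty)
    (hback : ∀ F ⊆ V, IsCompact F → μH[1] (e '' F) ≠ ⊤ → μH[1] F ≠ ⊤) (hT : IsCompact T)
    (hTV : T ⊆ V) (hTlen' : μH[1] (e '' T) ≠ ⊤) (hK : IsCompact K) (hKV : K ⊆ V)
    (hKlen : μH[1] K ≠ ⊤) (hTK : Disjoint T K) (hlen : μH[1] T ≤ μH[1] K) :
    μH[1] (e '' T) ≤ μH[1] (e '' K) := by
  by_contra! hlt
  set M := μH[1] (e '' frontier W) + (μH[1] (e '' T) + 1) * ENNReal.ofReal (2 * π)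
  obtain ⟨ε, hε, hεM⟩ := exists_ne_zero_mul_sq_le (M := M + μH[1] (e '' K))
    ((hW.sdiff isClosed_closure hWV).measure_image_ne_zero (ν := volume))
    (tsub_pos_of_lt hlt).ne' (by finiteness)
  have hOV : V \ K ⊆ V := Set.sdiff_subset
  obtain ⟨N, hN, hTN, hNO, hNlen, hNvol⟩ := exists_compact_neighborhood_volume_image_le hT hTlen'
    (hV.sdiff hK.isClosed) (hOV.trans (hVW.trans hW.subset)) (Set.subset_sdiff.2 ⟨hTV, hTK⟩) hε
  have hNV := hNO.trans hOV
  have hWN : W \ closure V ⊆ (W \ N) \ K := fun x hx =>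
    ⟨⟨hx.1, fun hxN => hx.2 (subset_closure (hNV hxN))⟩, fun hxK => hx.2 (subset_closure (hKV hxK))⟩
  have hNfin : μH[1] (e '' frontier N) ≠ ⊤ := ne_top_of_le_ne_top (by finiteness) hNlen
  have hNfin' : μH[1] (frontier N) ≠ ⊤ := hback _ (hN.isClosed.frontier_subset.trans hNV)
    (hN.of_isClosed_subset isClosed_frontier hN.isClosed.frontier_subset) hNfin
  have hM : μH[1] (e '' (frontier W ∪ frontier N)) ≤ M := by
    rw [Set.image_union]
    exact (measure_union_le _ _).trans (add_le_add le_rfl hNlen)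
  refine (h.measure_image_mul_sq_lt hμ volume_absolutelyContinuous_hausdorffMeasure_two hW hW₀ hN
    (hNV.trans hVW) (hWV.mono (hWN.trans Set.sdiff_subset)) (measure_union_ne_top hWlen hNfin')
    (ne_top_of_le_ne_top (by finiteness) hM) hT hTN hK
    (fun x hx => ⟨hVW (hKV hx), fun hxN => (hNO hxN).2 hx⟩) hKlen hlen hlt).not_ge ?_
  calc volume (e '' N) * (μH[1] (e '' (frontier W ∪ frontier N)) + μH[1] (e '' K)) ^ 2
      ≤ ε * (M + μH[1] (e '' K)) ^ 2 := by gcongr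
    _ ≤ _ := hεM
    _ ≤ _ := by gcongr

/-- `φ` takes pairs of points of `S` at equal distance to pairs of points at equal distance. -/
def PreservesEqDistOn {X Y : Type*} [PseudoMetricSpace X] [PseudoMetricSpace Y] (φ : X → Y)
    (S : Set X) : Prop :=
  ∀ u ∈ S, ∀ v ∈ S, ∀ x ∈ S, ∀ y ∈ S, dist u v = dist x y → dist (φ u) (φ v) = dist (φ x) (φ y)

/-- Any two pairs of points at equal distance are related by an isometry of `X`. -/
def IsTwoPointHomogeneous (X : Type*) [PseudoMetricSpace X] : Prop :=
  ∀ u v x y : X, dist u v = dist x y → ∃ g : X → X, Isometry g ∧ g u = x ∧ g v = y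

-- Two sets near `o` are both compared with an isometric copy near another point `q`.
lemma IsTwoPointHomogeneous.exists_pos_hausdorffMeasure_image_le [MeasurableSpace X] [BorelSpace X]
    (hX : IsTwoPointHomogeneous X) {Y : Type*} [EMetricSpace Y] [MeasurableSpace Y] [BorelSpace Y]
    {φ : X → Y} {V : Set X} (hV : IsOpen V) (ho : o ∈ V) (hq : q ∈ V) (hoq : o ≠ q)
    (h : ∀ T ⊆ V, ∀ K ⊆ V, IsCompact T → IsCompact K → Disjoint T K → μH[1] K ≠ ⊤ →
      μH[1] T ≤ μH[1] K → μH[1] (φ '' T) ≤ μH[1] (φ '' K)) :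
    ∃ κ > 0, ball o κ ⊆ V ∧ ∀ T ⊆ ball o κ, ∀ K ⊆ ball o κ, IsCompact T → IsCompact K →
      μH[1] K ≠ ⊤ → μH[1] T ≤ μH[1] K → μH[1] (φ '' T) ≤ μH[1] (φ '' K) := by
  obtain ⟨g, hg, hgo, -⟩ := hX o o q q (by simp)
  obtain ⟨δ, hδ, hδV⟩ := Metric.isOpen_iff.1 hV o ho
  obtain ⟨δ', hδ', hδV'⟩ := Metric.isOpen_iff.1 hV q hq
  set κ := min (dist o q / 2) (min δ δ')
  have hκδ : ball o κ ⊆ V :=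
    (ball_subset_ball ((min_le_right _ _).trans (min_le_left _ _))).trans hδV
  have hκδ' : ball q κ ⊆ V :=
    (ball_subset_ball ((min_le_right _ _).trans (min_le_right _ _))).trans hδV'
  have hdisj : Disjoint (ball o κ) (ball q κ) := by
    refine ball_disjoint_ball ?_
    linarith [min_le_left (dist o q / 2) (min δ δ')]
  have hκ : 0 < κ := lt_min (half_pos (dist_pos.2 hoq)) (lt_min hδ hδ')
  refine ⟨κ, hκ, hκδ, fun T hT K hK hTc hKc hKlen hlen => ?_⟩
  have hgK : g '' K ⊆ ball q κ := by
    rintro _ ⟨x, hx, rfl⟩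
    rw [mem_ball, ← hgo, hg.dist_eq]
    exact hK hx
  have hgKc := hKc.image hg.continuous
  have hgKlen : μH[1] (g '' K) = μH[1] K := hg.hausdorffMeasure_image (.inl zero_le_one) K
  exact (h T (hT.trans hκδ) _ (hgK.trans hκδ') hTc hgKc (hdisj.mono hT hgK) (by rwa [hgKlen])
    (by rwa [hgKlen])).trans (h _ (hgK.trans hκδ') K (hK.trans hκδ) hgKc hKc
      (hdisj.symm.mono hgK hK) hKlen hgKlen.le)

variable {Y : Type*} [NormedAddCommGroup Y] [NormedSpace ℝ Y] {e : OpenPartialHomeomorph X Y}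

lemma exists_pos_segment_subset_image_ball (ho : o ∈ e.source) {η : ℝ} (hη : 0 < η)
    (hball : ball o η ⊆ e.source) : ∃ κ > 0, κ ≤ η ∧ ∀ u ∈ ball o κ, ∀ v ∈ ball o κ,
      segment ℝ (e u) (e v) ⊆ e '' ball o η := by
  obtain ⟨r, hr, hrη⟩ := Metric.isOpen_iff.1 (e.isOpen_image_of_subset_source isOpen_ball hball)
    (e o) ⟨o, mem_ball_self hη, rfl⟩
  obtain ⟨κ, hκ, hκr⟩ := Metric.continuousAt_iff.1 (e.continuousAt ho) r hr
  refine ⟨min κ η, lt_min hκ hη, min_le_right _ _, fun u hu v hv => ?_⟩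
  have hsub : ball o (min κ η) ⊆ ball o κ := ball_subset_ball (min_le_left _ _)
  exact ((convex_ball (e o) r).segment_subset (hκr (hsub hu)) (hκr (hsub hv))).trans hrη

lemma exists_isPreconnected_image_eq_segment {u v : X} {S : Set X} (hS : S ⊆ e.source) (hu : u ∈ S)
    (hv : v ∈ S) (hseg : segment ℝ (e u) (e v) ⊆ e '' S) :
    ∃ K ⊆ S, IsCompact K ∧ IsPreconnected K ∧ u ∈ K ∧ v ∈ K ∧ e '' K = segment ℝ (e u) (e v) := by
  have hsegt : segment ℝ (e u) (e v) ⊆ e.target :=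
    hseg.trans ((Set.image_mono hS).trans e.image_source_eq_target.le)
  have hcont := e.symm.continuousOn.mono hsegt
  refine ⟨e.symm '' segment ℝ (e u) (e v), (Set.image_mono hseg).trans
    (e.toPartialEquiv.symm_image_image_of_subset_source hS).le, ?_,
    (convex_segment _ _).isPreconnected.image _ hcont,
    ⟨e u, left_mem_segment ℝ _ _, e.left_inv (hS hu)⟩,
    ⟨e v, right_mem_segment ℝ _ _, e.left_inv (hS hv)⟩, e.image_symm_image_of_subset_target hsegt⟩
  refine IsCompact.image_of_continuousOn ?_ hcont
  rw [segment_eq_image_lineMap]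
  exact isCompact_Icc.image AffineMap.lineMap_continuous

lemma image_subset_ball_of_isometry {g : X → X} (hg : Isometry g) {u : X} {K : Set X} {δ : ℝ}
    (hK : K ⊆ ball o δ) (hu : u ∈ ball o δ) (hgu : g u ∈ ball o δ) :
    g '' K ⊆ ball o (δ + δ + δ) := by
  rintro _ ⟨k, hk, rfl⟩
  calc dist (g k) o ≤ dist k u + dist (g u) o := by
        rw [← hg.dist_eq k u]
        exact dist_triangle _ _ _
    _ ≤ dist k o + dist u o + dist (g u) o := by
        gcongr
        exact dist_triangle_right _ _ _
    _ < δ + δ + δ := add_lt_add (add_lt_add (hK hk) hu) hgu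

variable [MeasurableSpace X] [BorelSpace X] [MeasurableSpace Y] [BorelSpace Y]

-- The curve `K` over the segment from `e u` to `e v` is moved by an isometry taking `u`, `v` to
-- `x`, `y`; the image of the moved curve is no longer than the segment.
lemma IsTwoPointHomogeneous.dist_image_le_of_dist_eq (hX : IsTwoPointHomogeneous X) {δ : ℝ}
    {u v x y : X} (hballe : ball o (δ + δ + δ) ⊆ e.source) (hu : u ∈ ball o δ) (hv : v ∈ ball o δ)
    (hx : x ∈ ball o δ) (hseg : segment ℝ (e u) (e v) ⊆ e '' ball o δ)
    (hback : ∀ F ⊆ ball o δ, IsCompact F → μH[1] (e '' F) ≠ ⊤ → μH[1] F ≠ ⊤)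
    (h : ∀ T ⊆ ball o (δ + δ + δ), ∀ K ⊆ ball o δ, IsCompact T → IsCompact K →
      μH[1] K ≠ ⊤ → μH[1] T ≤ μH[1] K → μH[1] (e '' T) ≤ μH[1] (e '' K))
    (huv : dist u v = dist x y) : dist (e x) (e y) ≤ dist (e u) (e v) := by
  have hδ : 0 < δ := pos_of_mem_ball hu
  have hsub : ball o δ ⊆ ball o (δ + δ + δ) := ball_subset_ball (by linarith)
  obtain ⟨K, hK, hKc, hKpre, hu', hv', heK⟩ :=
    exists_isPreconnected_image_eq_segment (hsub.trans hballe) hu hv hseg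
  obtain ⟨g, hg, rfl, rfl⟩ := hX u v x y huv
  have hgK := image_subset_ball_of_isometry hg hK hu hx
  have hKlen : μH[1] K ≠ ⊤ := by
    refine hback K hK hKc ?_
    rw [heK, hausdorffMeasure_segment]
    exact edist_ne_top _ _
  have hle : edist (e (g u)) (e (g v)) ≤ edist (e u) (e v) :=
    calc edist (e (g u)) (e (g v)) ≤ μH[1] (e '' (g '' K)) :=
          edist_le_hausdorffMeasure_one ((hKpre.image g hg.continuous.continuousOn).image e
            (e.continuousOn.mono (hgK.trans hballe))) ⟨_, ⟨u, hu', rfl⟩, rfl⟩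
            ⟨_, ⟨v, hv', rfl⟩, rfl⟩
      _ ≤ μH[1] (e '' K) := h _ hgK K hK (hKc.image hg.continuous) hKc hKlen
          (hg.hausdorffMeasure_image (.inl zero_le_one) K).le
      _ = edist (e u) (e v) := by rw [heK, hausdorffMeasure_segment]
  rwa [edist_dist, edist_dist, ENNReal.ofReal_le_ofReal_iff dist_nonneg] at hle

lemma IsTwoPointHomogeneous.exists_pos_preservesEqDistOn (hX : IsTwoPointHomogeneous X) {V : Set X}
    (hV : IsOpen V) (hVe : V ⊆ e.source) (ho : o ∈ V)
    (hback : ∀ F ⊆ V, IsCompact F → μH[1] (e '' F) ≠ ⊤ → μH[1] F ≠ ⊤)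
    (h : ∀ T ⊆ V, ∀ K ⊆ V, IsCompact T → IsCompact K → μH[1] K ≠ ⊤ →
      μH[1] T ≤ μH[1] K → μH[1] (e '' T) ≤ μH[1] (e '' K)) :
    ∃ κ > 0, ball o κ ⊆ V ∧ PreservesEqDistOn e (ball o κ) := by
  obtain ⟨δ, hδ, hδV⟩ := Metric.isOpen_iff.1 hV o ho
  have hδV' : ball o (δ / 3 + δ / 3 + δ / 3) ⊆ V := (ball_subset_ball (by linarith)).trans hδV
  have hηV : ball o (δ / 3) ⊆ V := (ball_subset_ball (by linarith)).trans hδV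
  obtain ⟨κ, hκ, hκη, hseg⟩ :=
    exists_pos_segment_subset_image_ball (hVe ho) (by positivity) (hηV.trans hVe)
  have hκη' : ball o κ ⊆ ball o (δ / 3) := ball_subset_ball hκη
  have hle : ∀ u ∈ ball o κ, ∀ v ∈ ball o κ, ∀ x ∈ ball o κ, ∀ y ∈ ball o κ,
      dist u v = dist x y → dist (e x) (e y) ≤ dist (e u) (e v) := fun u hu v hv x hx y _ =>
    hX.dist_image_le_of_dist_eq (hδV'.trans hVe) (hκη' hu) (hκη' hv) (hκη' hx) (hseg u hu v hv)
      (fun F hF => hback F (hF.trans hηV))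
      fun T hT K hK => h T (hT.trans hδV') K (hK.trans hηV)
  exact ⟨κ, hκ, hκη'.trans hηV, fun u hu v hv x hx y hy huv =>
    (hle x hx y hy u hu v hv huv.symm).antisymm (hle u hu v hv x hx y hy huv)⟩

end LengthComparison

section SphereMeasure

variable {F : Type*} [NormedAddCommGroup F] [InnerProductSpace ℝ F]

lemma isTwoPointHomogeneous_sphere (r : ℝ) : IsTwoPointHomogeneous (sphere (0 : F) r) := by
  rintro ⟨u, hu⟩ ⟨v, hv⟩ ⟨x, hx⟩ ⟨y, hy⟩ h
  rw [mem_sphere_zero_iff_norm] at hu hv hx hy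
  let s := (ℝ ∙ (u - x))ᗮ.reflection
  have hsu : s u = x := Submodule.reflection_sub (hu.trans hx.symm)
  have hsv : ‖s v‖ = ‖y‖ := by rw [s.norm_map, hv, hy]
  let t := (ℝ ∙ (s v - y))ᗮ.reflection
  have htx : t x = x := by
    refine Submodule.reflection_mem_subspace_eq_self
      (Submodule.mem_orthogonal_singleton_iff_inner_right.2 ?_)
    have hdist : ‖x - s v‖ = ‖x - y‖ := by
      rw [← dist_eq_norm, ← dist_eq_norm, ← hsu, s.dist_map, hsu]
      exact h
    have hsq := norm_sub_sq_real x (s v)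
    rw [hdist, hsv, norm_sub_sq_real x y] at hsq
    rw [inner_sub_left, real_inner_comm, real_inner_comm x y]
    linarith
  have hmap : ∀ p : sphere (0 : F) r, t (s p) ∈ sphere (0 : F) r := fun p => by
    simp [t.norm_map, s.norm_map]
  refine ⟨fun p => ⟨t (s p), hmap p⟩, Isometry.of_dist_eq fun p q => ?_, ?_, ?_⟩
  · exact (t.dist_map _ _).trans (s.dist_map _ _)
  · exact Subtype.ext ((congrArg t hsu).trans htx)
  · exact Subtype.ext (Submodule.reflection_sub hsv)

variable {n : ℕ} [Fact (Module.finrank ℝ F = n + 1)]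

lemma exists_chart_lipschitzOnWith (x : sphere (0 : F) 1) :
    ∃ c : OpenPartialHomeomorph (sphere (0 : F) 1) (EuclideanSpace ℝ (Fin n)), x ∈ c.source ∧
      (∃ C, ∃ s ∈ nhds x, LipschitzOnWith C c s) ∧
      ∃ C, ∃ t ∈ nhds (c x), LipschitzOnWith C c.symm t := by
  let c := stereographic (norm_eq_of_mem_sphere (-x))
  let i := (OrthonormalBasis.fromOrthogonalSpanSingleton (𝕜 := ℝ) n
    (ne_zero_of_mem_unit_sphere (-x))).repr
  refine ⟨stereographic' n (-x), ?_, ?_, ?_⟩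
  · rw [stereographic'_source]
    exact ne_neg_of_mem_unit_sphere ℝ x
  · have hx : innerSL ℝ ((-x : sphere (0 : F) 1) : F) (x : F) ≠ 1 := by
      simp only [coe_neg_sphere, innerSL_apply_apply, inner_neg_left, real_inner_self_eq_norm_sq,
        norm_eq_of_mem_sphere]
      norm_num
    have hsmooth : ContDiffAt ℝ 1 (stereoToFun ((-x : sphere (0 : F) 1) : F)) (x : F) :=
      contDiffOn_stereoToFun.contDiffAt
        ((isOpen_ne_fun (innerSL ℝ _).continuous continuous_const).mem_nhds hx)
    obtain ⟨C, s, hs, hLip⟩ := hsmooth.exists_lipschitzOnWith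
    exact ⟨C, Subtype.val ⁻¹' s, continuous_subtype_val.continuousAt hs, fun p hp q hq =>
      (i.edist_map (c p) (c q)).trans_le (hLip hp hq)⟩
  · have hsmooth : ContDiff ℝ 1 fun w : EuclideanSpace ℝ (Fin n) =>
        stereoInvFunAux ((-x : sphere (0 : F) 1) : F) (i.symm w) :=
      contDiff_stereoInvFunAux.comp
        ((Submodule.subtypeL _).contDiff.comp i.symm.contDiff)
    obtain ⟨C, t, ht, hLip⟩ := hsmooth.contDiffAt.exists_lipschitzOnWith
    exact ⟨C, t, ht, hLip⟩

variable [MeasurableSpace F] [BorelSpace F]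

lemma isOpenPosMeasure_hausdorffMeasure_sphere :
    (μH[n] : Measure (sphere (0 : F) 1)).IsOpenPosMeasure := by
  refine ⟨fun O hO ⟨x, hx⟩ hO₀ => ?_⟩
  obtain ⟨c, hxc, ⟨C, s, hs, hLip⟩, -⟩ := exists_chart_lipschitzOnWith (n := n) x
  have hnhds : c '' (O ∩ s) ∈ nhds (c x) :=
    c.image_mem_nhds hxc (Filter.inter_mem (hO.mem_nhds hx) hs)
  have hμ : (μH[n] : Measure (EuclideanSpace ℝ (Fin n))).IsAddHaarMeasure := by
    simpa using isAddHaarMeasure_hausdorffMeasure (E := EuclideanSpace ℝ (Fin n))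
  refine (Measure.measure_pos_of_mem_nhds μH[n] hnhds).ne' (le_antisymm ?_ zero_le)
  calc μH[n] (c '' (O ∩ s)) ≤ C ^ (n : ℝ) * μH[n] (O ∩ s) :=
        (hLip.mono Set.inter_subset_right).hausdorffMeasure_image_le n.cast_nonneg
    _ = 0 := by rw [measure_mono_null Set.inter_subset_left hO₀, mul_zero]

lemma isLocallyFiniteMeasure_hausdorffMeasure_sphere :
    IsLocallyFiniteMeasure (μH[n] : Measure (sphere (0 : F) 1)) := by
  refine ⟨fun x => ?_⟩
  obtain ⟨c, hxc, -, C, t, ht, hLip⟩ := exists_chart_lipschitzOnWith (n := n) x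
  have hμ : (μH[n] : Measure (EuclideanSpace ℝ (Fin n))).IsAddHaarMeasure := by
    simpa using isAddHaarMeasure_hausdorffMeasure (E := EuclideanSpace ℝ (Fin n))
  obtain ⟨W, hW, hWfin⟩ := Measure.finiteAt_nhds μH[n] (c x)
  refine ⟨c.symm '' (W ∩ t), ?_, ?_⟩
  · rw [← c.symm_map_nhds_eq hxc]
    exact Filter.image_mem_map (Filter.inter_mem hW ht)
  · calc μH[n] (c.symm '' (W ∩ t)) ≤ C ^ (n : ℝ) * μH[n] (W ∩ t) :=
          (hLip.mono Set.inter_subset_right).hausdorffMeasure_image_le n.cast_nonneg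
      _ ≤ C ^ (n : ℝ) * μH[n] W := by gcongr; exact Set.inter_subset_left
      _ < ⊤ := ENNReal.mul_lt_top (by finiteness) hWfin

end SphereMeasure

section Hexagon

variable {V : Type*} [NormedAddCommGroup V] [InnerProductSpace ℝ V] {a b c d o : V}

lemma add_add_eq_zero_of_norm_eq_of_inner_eq (hV : Module.finrank ℝ V = 2) (hab : ‖a‖ = ‖b‖)
    (hbc : ‖b‖ = ‖c‖) (hab' : inner ℝ a b = inner ℝ b c) (hbc' : inner ℝ b c = inner ℝ c a)
    (hne : a ≠ b) : a + b + c = 0 := by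
  have : FiniteDimensional ℝ V := .of_finrank_eq_succ hV
  have hgap : inner ℝ a a - inner ℝ b a ≠ 0 := fun h => hne <| by
    rw [← sub_eq_zero, ← inner_self_eq_zero (𝕜 := ℝ), real_inner_sub_sub_self,
      real_inner_self_eq_norm_sq b, ← hab, ← real_inner_self_eq_norm_sq a]
    linarith [real_inner_comm a b]
  obtain ⟨g, hg, i, hi⟩ : ∃ g : Fin 3 → ℝ, ∑ i, g i • ![a, b, c] i = 0 ∧ ∃ i, g i ≠ 0 :=
    Fintype.not_linearIndependent_iff.1 fun h => by simpa [hV] using h.fintype_card_le_finrank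
  simp only [Fin.sum_univ_three, Matrix.cons_val] at hg
  have hinner : ∀ v, g 0 * inner ℝ a v + g 1 * inner ℝ b v + g 2 * inner ℝ c v = 0 := fun v => by
    simpa [inner_add_left, real_inner_smul_left] using congrArg (inner ℝ · v) hg
  have hb : inner ℝ b b = inner ℝ a a := by simp [hab]
  have hc : inner ℝ c c = inner ℝ a a := by simp [hab, hbc]
  have h01 : g 0 = g 1 := by
    refine sub_eq_zero.1 ((mul_eq_zero.1 ?_).resolve_right hgap)
    linear_combination hinner a - hinner b + g 1 * hb + g 2 * (real_inner_comm b c + hbc') +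
      g 0 * real_inner_comm b a
  have h12 : g 1 = g 2 := by
    refine sub_eq_zero.1 ((mul_eq_zero.1 ?_).resolve_right hgap)
    linear_combination hinner b - hinner c - g 1 * hb + g 2 * hc
      - g 0 * (hab' + hbc' + real_inner_comm a c) - g 1 * (hab' + real_inner_comm a b)
      + g 2 * (hab' + real_inner_comm a b - real_inner_comm b c)
  have h1 : g 1 ≠ 0 := by
    fin_cases i
    · exact h01 ▸ hi
    · exact hi
    · exact h12 ▸ hi
  refine (smul_eq_zero.1 ?_).resolve_left h1
  rw [smul_add, smul_add]
  simpa only [h01, ← h12] using hg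

lemma eq_neg_of_norm_eq_of_inner_eq_zero (hV : Module.finrank ℝ V = 2) (hdc : ‖d‖ = ‖c‖)
    (ha : a ≠ 0) (hc : inner ℝ c a = 0) (hd : inner ℝ d a = 0) (hne : d ≠ c) : d = -c := by
  have : FiniteDimensional ℝ V := .of_finrank_eq_succ hV
  have hdist : ∀ {x y : V}, inner ℝ x y = 0 → dist x y = √(‖x‖ * ‖x‖ + ‖y‖ * ‖y‖) := fun h =>
    (dist_eq_norm _ _).trans (norm_sub_eq_sqrt_iff_real_inner_eq_zero.2 h)
  have hc₀ : c ≠ 0 := fun h => hne <| by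
    rw [h, norm_zero, norm_eq_zero] at hdc
    rw [h, hdc]
  have : IsAddTorsionFree V := .of_isTorsionFree ℝ V
  have hdist' : ∀ {x y : V}, inner ℝ x y = 0 → dist x (-y) = dist x y := fun h => by
    rw [hdist h, hdist (by rw [inner_neg_right, h, neg_zero]), norm_neg]
  have hca : dist (-c) a = dist c a := by
    rw [dist_comm, hdist' (inner_eq_zero_symm.1 hc), dist_comm]
  have hda : dist d a = dist c a := by rw [hdist hd, hdist hc, hdc]
  exact (EuclideanGeometry.eq_of_dist_eq_of_dist_eq_of_finrank_eq_two hV (self_ne_neg.2 ha)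
    (self_ne_neg.2 hc₀) rfl hca hda (hdist' hc) (by rw [dist_neg_neg])
    ((hdist' hd).trans hda)).resolve_left hne

lemma dist_eq_of_hexagon (hV : Module.finrank ℝ V = 2) (ha : dist a o = dist b o)
    (hb : dist b o = dist c o) (hd : dist d o = dist c o) (hab : dist a b = dist b c)
    (hbc : dist b c = dist c a) (had : dist a d = dist b d) (hne : a ≠ b) (hdc : d ≠ c) :
    dist a d = dist a o := by
  have hinner : ∀ x y : V, inner ℝ (x - o) (y - o) =
      (dist x o ^ 2 + dist y o ^ 2 - dist x y ^ 2) / 2 := fun x y => by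
    rw [real_inner_eq_norm_mul_self_add_norm_mul_self_sub_norm_sub_mul_self_div_two,
      sub_sub_sub_cancel_right]
    simp only [dist_eq_norm, sq]
  have hsum : (a - o) + (b - o) + (c - o) = 0 :=
    add_add_eq_zero_of_norm_eq_of_inner_eq hV (by simpa only [dist_eq_norm] using ha)
      (by simpa only [dist_eq_norm] using hb) (by rw [hinner, hinner, hab, ha, hb])
      (by rw [hinner, hinner, hbc, ha, hb]) (by simpa using hne)
  have hneg : d - o = -(c - o) := by
    refine eq_neg_of_norm_eq_of_inner_eq_zero (a := (a - o) - (b - o)) hV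
      (by simpa only [dist_eq_norm] using hd) (by simpa [sub_eq_zero] using hne) ?_ ?_
      (by simpa using hdc)
    · rw [inner_sub_right, hinner, hinner, ha, ← hbc, dist_comm c b]
      ring
    · rw [inner_sub_right, hinner, hinner, ha, dist_comm d a, dist_comm d b, had]
      ring
  rw [dist_eq_norm, ← sub_sub_sub_cancel_right a d o, hneg, ha, dist_eq_norm, ← norm_neg (b - o)]
  congr 1
  rw [eq_neg_iff_add_eq_zero, ← hsum]
  abel

end Hexagon

lemma eq_apply_zero_of_forall_exists_lt {Y : Type*} [TopologicalSpace Y] [T1Space Y] {f : ℝ → Y}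
    {a : ℝ} (ha : 0 ≤ a) (hf : ContinuousOn f (Set.Icc 0 a))
    (h : ∀ x ∈ Set.Ioc 0 a, ∃ y ∈ Set.Ico 0 x, f y = f x) : f a = f 0 := by
  have hS : IsCompact (Set.Icc 0 a ∩ f ⁻¹' {f a}) :=
    isCompact_Icc.of_isClosed_subset (hf.preimage_isClosed_of_isClosed isClosed_Icc
      isClosed_singleton) Set.inter_subset_left
  obtain ⟨x, ⟨⟨hx₀, hxa⟩, hfx⟩, hmin⟩ := hS.exists_isLeast ⟨a, ⟨ha, le_rfl⟩, rfl⟩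
  rcases hx₀.eq_or_lt with rfl | hx
  · exact hfx.symm
  · obtain ⟨y, ⟨hy₀, hyx⟩, hy⟩ := h x ⟨hx, hxa⟩
    exact absurd (hmin ⟨⟨hy₀, hyx.le.trans hxa⟩, hy.trans hfx⟩) hyx.not_ge

/-- The unit sphere `S²` as a metric space. -/
abbrev UnitSphere : Type := sphere (0 : EuclideanSpace ℝ (Fin 3)) 1

namespace UnitSphere

variable (b : OrthonormalBasis (Fin 3) ℝ (EuclideanSpace ℝ (Fin 3)))

/-- The vector with spherical coordinates `α` (polar angle from `b 0`) and `θ` (azimuth). -/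
noncomputable def polarVec (α θ : ℝ) : EuclideanSpace ℝ (Fin 3) :=
  cos α • b 0 + (sin α * cos θ) • b 1 + (sin α * sin θ) • b 2

variable {b}

lemma inner_polarVec (α θ β η : ℝ) : inner ℝ (polarVec b α θ) (polarVec b β η) =
    cos α * cos β + sin α * sin β * cos (θ - η) := by
  have h01 := b.inner_eq_zero (show (0 : Fin 3) ≠ 1 by decide)
  have h02 := b.inner_eq_zero (show (0 : Fin 3) ≠ 2 by decide)
  have h12 := b.inner_eq_zero (show (1 : Fin 3) ≠ 2 by decide)
  have h10 := b.inner_eq_zero (show (1 : Fin 3) ≠ 0 by decide)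
  have h20 := b.inner_eq_zero (show (2 : Fin 3) ≠ 0 by decide)
  have h21 := b.inner_eq_zero (show (2 : Fin 3) ≠ 1 by decide)
  simp only [polarVec, inner_add_left, inner_add_right, real_inner_smul_left,
    real_inner_smul_right, real_inner_self_eq_norm_sq, b.norm_eq_one, h01, h02, h12, h10, h20, h21,
    cos_sub]
  ring

lemma norm_polarVec (α θ : ℝ) : ‖polarVec b α θ‖ = 1 := by
  rw [← sq_eq_sq₀ (norm_nonneg _) zero_le_one, ← real_inner_self_eq_norm_sq, inner_polarVec,
    sub_self, cos_zero]
  linear_combination cos_sq_add_sin_sq α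

variable (b) in
/-- The point of the unit sphere with spherical coordinates `α` (polar angle from `b 0`) and `θ`
(azimuth). -/
noncomputable def polar (α θ : ℝ) : UnitSphere :=
  ⟨polarVec b α θ, mem_sphere_zero_iff_norm.2 (norm_polarVec α θ)⟩

lemma dist_polar_sq (α θ β η : ℝ) : dist (polar b α θ) (polar b β η) ^ 2 =
    2 - 2 * (cos α * cos β + sin α * sin β * cos (θ - η)) := by
  rw [Subtype.dist_eq, dist_eq_norm, norm_sub_sq_real, polar, polar, inner_polarVec, norm_polarVec,
    norm_polarVec]
  ring

lemma dist_polar_pole_sq (α θ : ℝ) : dist (polar b α θ) (polar b 0 0) ^ 2 = 2 - 2 * cos α := by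
  rw [dist_polar_sq, cos_zero, sin_zero]
  ring

lemma dist_polar_polar_sq (α θ η : ℝ) :
    dist (polar b α θ) (polar b α η) ^ 2 = 2 * sin α ^ 2 * (1 - cos (θ - η)) := by
  rw [dist_polar_sq]
  linear_combination -2 * cos_sq_add_sin_sq α

lemma polar_ne_polar {α θ η : ℝ} (hα : sin α ≠ 0) (hθη : cos (θ - η) ≠ 1) :
    polar b α θ ≠ polar b α η := fun h => by
  have hdist := dist_polar_polar_sq (b := b) α θ η
  rw [h, dist_self, zero_pow two_ne_zero, eq_comm, mul_eq_zero, sub_eq_zero] at hdist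
  exact hdist.elim (by positivity) hθη.symm

lemma dist_polar_pole_eq (α θ η : ℝ) :
    dist (polar b α θ) (polar b 0 0) = dist (polar b α η) (polar b 0 0) := by
  rw [← sq_eq_sq₀ dist_nonneg dist_nonneg, dist_polar_pole_sq, dist_polar_pole_sq]

lemma dist_polar_polar_eq (α : ℝ) {θ η θ' η' : ℝ} (h : cos (θ - η) = cos (θ' - η')) :
    dist (polar b α θ) (polar b α η) = dist (polar b α θ') (polar b α η') := by
  rw [← sq_eq_sq₀ dist_nonneg dist_nonneg, dist_polar_polar_sq, dist_polar_polar_sq, h]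

lemma dist_polar_pole_le {α : ℝ} (hα : 0 ≤ α) (θ : ℝ) :
    dist (polar b α θ) (polar b 0 0) ≤ α := by
  refine (pow_le_pow_iff_left₀ dist_nonneg hα two_ne_zero).1 ?_
  rw [dist_polar_pole_sq]
  linarith [one_sub_sq_div_two_le_cos (x := α)]

lemma continuous_polar {X : Type*} [TopologicalSpace X] {f g : X → ℝ} (hf : Continuous f)
    (hg : Continuous g) : Continuous fun x => polar b (f x) (g x) := by
  refine Continuous.subtype_mk ?_ _
  unfold polarVec
  fun_prop

lemma lipschitzWith_polar (α : ℝ) : LipschitzWith 1 (polar b α) := by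
  refine LipschitzWith.of_dist_le_mul fun θ η => ?_
  rw [NNReal.coe_one, one_mul]
  refine (pow_le_pow_iff_left₀ dist_nonneg dist_nonneg two_ne_zero).1 ?_
  rw [dist_polar_polar_sq, Real.dist_eq, sq_abs]
  nlinarith [one_sub_sq_div_two_le_cos (x := θ - η), sin_sq_le_one α, cos_le_one (θ - η)]

lemma exists_polar_zero_eq (x : UnitSphere) : ∃ b, polar b 0 0 = x := by
  have hx : Orthonormal ℝ
      (({0} : Set (Fin 3)).domRestrict fun _ => (x : EuclideanSpace ℝ (Fin 3))) :=
    ⟨fun _ => norm_eq_of_mem_sphere x, fun i j hij => absurd (Subsingleton.elim i j) hij⟩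
  obtain ⟨b, hb⟩ := hx.exists_orthonormalBasis_extension_of_card_eq (by simp)
  refine ⟨b, Subtype.ext ?_⟩
  simp [polar, polarVec, hb 0 rfl]

lemma exists_eq_polar (x : UnitSphere) :
    ∃ α ∈ Set.Icc 0 π, ∃ θ ∈ Set.Icc (-π) π, polar b α θ = x := by
  have hx : b.repr x 0 ^ 2 + b.repr x 1 ^ 2 + b.repr x 2 ^ 2 = 1 := by
    have h := EuclideanSpace.norm_sq_eq (b.repr x)
    rw [b.repr.norm_map, norm_eq_of_mem_sphere, Fin.sum_univ_three] at h
    simpa using h.symm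
  set z : ℂ := ⟨b.repr x 1, b.repr x 2⟩
  have hz : ‖z‖ = √(1 - b.repr x 0 ^ 2) := by
    rw [Complex.norm_def, Complex.normSq_mk]
    congr 1
    linear_combination hx
  have hcos : cos (arccos (b.repr x 0)) = b.repr x 0 := cos_arccos (by nlinarith) (by nlinarith)
  refine ⟨arccos (b.repr x 0), ⟨arccos_nonneg _, arccos_le_pi _⟩, z.arg,
    ⟨(Complex.neg_pi_lt_arg z).le, Complex.arg_le_pi z⟩, Subtype.ext ?_⟩
  rw [polar]
  simp only [polarVec, hcos, sin_arccos, ← hz, Complex.norm_mul_cos_arg, Complex.norm_mul_sin_arg]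
  simpa [Fin.sum_univ_three] using b.sum_repr x

variable {o : UnitSphere} {r : ℝ}

lemma cos_arccos_one_sub_sq_div_two (hr₀ : 0 ≤ r) (hr : r ≤ 2) :
    cos (arccos (1 - r ^ 2 / 2)) = 1 - r ^ 2 / 2 :=
  cos_arccos (by nlinarith) (by nlinarith)

lemma polar_mem_sphere (hr₀ : 0 ≤ r) (hr : r ≤ 2) (θ : ℝ) :
    polar b (arccos (1 - r ^ 2 / 2)) θ ∈ sphere (polar b 0 0) r := by
  rw [mem_sphere, ← sq_eq_sq₀ dist_nonneg hr₀, dist_polar_pole_sq,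
    cos_arccos_one_sub_sq_div_two hr₀ hr]
  ring

lemma sphere_eq_image_polar (hr₀ : 0 ≤ r) (hr : r ≤ 2) :
    sphere (polar b 0 0) r = polar b (arccos (1 - r ^ 2 / 2)) '' Set.Icc (-π) π := by
  refine Set.Subset.antisymm (fun x hx => ?_) ?_
  · obtain ⟨β, hβ, θ, hθ, rfl⟩ := exists_eq_polar (b := b) x
    have hcosβ := dist_polar_pole_sq (b := b) β θ
    rw [mem_sphere.1 hx] at hcosβ
    refine ⟨θ, hθ, ?_⟩
    rw [show 1 - r ^ 2 / 2 = cos β by linarith, arccos_cos hβ.1 hβ.2]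
  · rintro _ ⟨θ, -, rfl⟩
    exact polar_mem_sphere hr₀ hr θ

lemma polar_zero_ne_polar_pi (hr₀ : 0 < r) (hr : r < 2) :
    polar b (arccos (1 - r ^ 2 / 2)) 0 ≠ polar b (arccos (1 - r ^ 2 / 2)) π := by
  refine polar_ne_polar (sin_pos_of_pos_of_lt_pi (arccos_pos.2 ?_) (arccos_lt_pi.2 ?_)).ne' ?_
  · nlinarith
  · nlinarith
  · rw [zero_sub, cos_neg, cos_pi]
    norm_num

lemma hausdorffMeasure_sphere_ne_top (hr₀ : 0 ≤ r) (hr : r ≤ 2) : μH[1] (sphere o r) ≠ ⊤ := by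
  obtain ⟨b, rfl⟩ := exists_polar_zero_eq o
  rw [sphere_eq_image_polar hr₀ hr]
  refine ne_top_of_le_ne_top ?_ ((lipschitzWith_polar _).hausdorffMeasure_image_le zero_le_one _)
  rw [hausdorffMeasure_real, Real.volume_Icc]
  finiteness

lemma isPreconnected_sphere (hr₀ : 0 ≤ r) (hr : r ≤ 2) : IsPreconnected (sphere o r) := by
  obtain ⟨b, rfl⟩ := exists_polar_zero_eq o
  rw [sphere_eq_image_polar hr₀ hr]
  exact isPreconnected_Icc.image _ (lipschitzWith_polar _).continuous.continuousOn

lemma hausdorffMeasure_sphere_ne_zero (hr₀ : 0 < r) (hr : r < 2) : μH[1] (sphere o r) ≠ 0 := by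
  have hpre : IsPreconnected (sphere o r) := isPreconnected_sphere hr₀.le hr.le
  obtain ⟨b, rfl⟩ := exists_polar_zero_eq o
  exact ((edist_pos.2 (polar_zero_ne_polar_pi (b := b) hr₀ hr)).trans_le
    (edist_le_hausdorffMeasure_one hpre (polar_mem_sphere hr₀.le hr.le 0)
      (polar_mem_sphere hr₀.le hr.le π))).ne'

lemma frontier_ball_eq_sphere (hr₀ : 0 < r) (hr : r ≤ 2) : frontier (ball o r) = sphere o r := by
  obtain ⟨b, rfl⟩ := exists_polar_zero_eq o
  refine Set.Subset.antisymm frontier_ball_subset_sphere fun x hx => ?_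
  rw [isOpen_ball.frontier_eq]
  refine ⟨?_, fun h => (mem_ball.1 h).ne (mem_sphere.1 hx)⟩
  rw [sphere_eq_image_polar hr₀.le hr] at hx
  obtain ⟨θ, -, rfl⟩ := hx
  have hα : 0 < arccos (1 - r ^ 2 / 2) := arccos_pos.2 (by nlinarith)
  have hcont : Continuous fun t => polar b t θ :=
    continuous_polar continuous_id continuous_const
  have hmem : arccos (1 - r ^ 2 / 2) ∈ closure (Set.Ico 0 (arccos (1 - r ^ 2 / 2))) := by
    rw [closure_Ico hα.ne]
    exact Set.right_mem_Icc.2 hα.le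
  refine hcont.continuousWithinAt.mem_closure hmem fun t ht => ?_
  have hcos := cos_lt_cos_of_nonneg_of_le_pi ht.1 (arccos_le_pi _) ht.2
  rw [cos_arccos_one_sub_sq_div_two hr₀.le hr] at hcos
  rw [mem_ball, ← pow_lt_pow_iff_left₀ dist_nonneg hr₀.le two_ne_zero, dist_polar_pole_sq]
  linarith

end UnitSphere

namespace UnitSphere

variable {o : UnitSphere} {r s : ℝ}

instance : (μH[2] : Measure UnitSphere).IsOpenPosMeasure :=
  have : Fact (Module.finrank ℝ (EuclideanSpace ℝ (Fin 3)) = 2 + 1) := ⟨by simp⟩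
  isOpenPosMeasure_hausdorffMeasure_sphere (n := 2)

instance : IsLocallyFiniteMeasure (μH[2] : Measure UnitSphere) :=
  have : Fact (Module.finrank ℝ (EuclideanSpace ℝ (Fin 3)) = 2 + 1) := ⟨by simp⟩
  isLocallyFiniteMeasure_hausdorffMeasure_sphere (n := 2)

lemma isRegion_ball {U : Set UnitSphere} (hr : 0 < r) (hU : closedBall o r ⊆ U) :
    IsRegion U (ball o r) where
  nonempty := nonempty_ball.2 hr
  isOpen := isOpen_ball
  isCompact_closure := isClosed_closure.isCompact
  closure_subset := closure_ball_subset_closedBall.trans hU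

section Image

variable {Y : Type*} [MetricSpace Y] [MeasurableSpace Y] [BorelSpace Y] {φ : UnitSphere → Y}

lemma exists_ne_zero_forall_le_hausdorffMeasure_image_sphere {a c : ℝ} (ha : 0 < a) (hac : a ≤ c)
    (hc : c < 2) (hφ : ContinuousOn φ (closedBall o c)) (hinj : Set.InjOn φ (closedBall o c)) :
    ∃ δ : ENNReal, δ ≠ 0 ∧ ∀ r ∈ Set.Icc a c, δ ≤ μH[1] (φ '' sphere o r) := by
  have hsub : ∀ r ∈ Set.Icc a c, sphere o r ⊆ closedBall o c := fun r hr =>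
    sphere_subset_closedBall.trans (closedBall_subset_closedBall hr.2)
  have hpre : ∀ r ∈ Set.Icc a c, IsPreconnected (φ '' sphere o r) := fun r hr =>
    (isPreconnected_sphere (ha.le.trans hr.1) (hr.2.trans hc.le)).image φ (hφ.mono (hsub r hr))
  obtain ⟨b, rfl⟩ := exists_polar_zero_eq o
  have hmem : ∀ θ, ∀ r ∈ Set.Icc a c,
      polar b (arccos (1 - r ^ 2 / 2)) θ ∈ sphere (polar b 0 0) r := fun θ r hr =>
    polar_mem_sphere (ha.le.trans hr.1) (hr.2.trans hc.le) θ
  have hcont : ∀ θ, ContinuousOn (fun r => φ (polar b (arccos (1 - r ^ 2 / 2)) θ)) (Set.Icc a c) :=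
    fun θ => hφ.comp (continuous_polar (by fun_prop) continuous_const).continuousOn
      fun r hr => hsub r hr (hmem θ r hr)
  obtain ⟨ρ, hρ, hmin⟩ := isCompact_Icc.exists_isMinOn (Set.nonempty_Icc.2 hac)
    (continuous_edist.comp_continuousOn ((hcont 0).prodMk (hcont π)))
  refine ⟨_, fun h => polar_zero_ne_polar_pi (b := b) (ha.trans_le hρ.1) (hρ.2.trans_lt hc) ?_,
    fun r hr => (hmin hr).trans <| edist_le_hausdorffMeasure_one (hpre r hr)
      (Set.mem_image_of_mem φ (hmem 0 r hr)) (Set.mem_image_of_mem φ (hmem π r hr))⟩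
  exact hinj (hsub ρ hρ (hmem 0 ρ hρ)) (hsub ρ hρ (hmem π ρ hρ)) (edist_eq_zero.1 h)

lemma exists_compact_le_hausdorffMeasure_image (hs : 0 < s) (hsr : s < r) (hr : r < 2)
    (hφ : ContinuousOn φ (closedBall o r)) (hinj : Set.InjOn φ (closedBall o r)) {L : ENNReal}
    (hL : L ≠ ⊤) :
    ∃ E ⊆ ball o r, IsCompact E ∧ Disjoint E (ball o s) ∧ μH[1] E ≠ ⊤ ∧ L ≤ μH[1] (φ '' E) := by
  obtain ⟨δ, hδ, hle⟩ := exists_ne_zero_forall_le_hausdorffMeasure_image_sphere hs hsr.le hr hφ hinj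
  obtain ⟨n, hn⟩ := ENNReal.exists_nat_mul_gt hδ hL
  obtain ⟨R, hR, rfl⟩ := (Set.Ico_infinite hsr).exists_subset_card_eq n
  have hsphere : ∀ t ∈ R, sphere o t ⊆ closedBall o r := fun t ht =>
    sphere_subset_closedBall.trans (closedBall_subset_closedBall (hR ht).2.le)
  have hcompact : ∀ t ∈ R, IsCompact (φ '' sphere o t) := fun t ht =>
    (isCompact_sphere o t).image_of_continuousOn (hφ.mono (hsphere t ht))
  have hdisj : (R : Set ℝ).PairwiseDisjoint fun t => φ '' sphere o t := by
    rintro t ht u hu htu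
    refine Set.disjoint_iff_inter_eq_empty.2 ?_
    rw [← hinj.image_inter (hsphere t ht) (hsphere u hu), Set.image_eq_empty,
      ← Set.disjoint_iff_inter_eq_empty, Set.disjoint_left]
    exact fun x hxt hxu => htu (hxt.symm.trans hxu)
  refine ⟨⋃ t ∈ R, sphere o t, Set.iUnion₂_subset fun t ht => ?_,
    R.isCompact_biUnion fun t _ => isCompact_sphere o t,
    Set.disjoint_iUnion₂_left.2 fun t ht => Set.disjoint_left.2 fun x hxt hxs => ?_, ?_, ?_⟩
  · exact sphere_subset_closedBall.trans (closedBall_subset_ball (hR ht).2)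
  · exact ((hR ht).1.trans_eq (mem_sphere.1 hxt).symm).not_gt hxs
  · refine ne_top_of_le_ne_top (ENNReal.sum_ne_top.2 fun t ht => ?_)
      (measure_biUnion_finset_le R fun t => sphere o t)
    exact hausdorffMeasure_sphere_ne_top (hs.le.trans (hR ht).1) ((hR ht).2.trans hr).le
  · rw [Set.image_iUnion₂, measure_biUnion_finset hdisj fun t ht => (hcompact t ht).measurableSet]
    calc L ≤ R.card * δ := hn.le
      _ = ∑ _t ∈ R, δ := by rw [Finset.sum_const, nsmul_eq_mul]
      _ ≤ _ := Finset.sum_le_sum fun t ht => hle t ⟨(hR ht).1, (hR ht).2.le⟩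

end Image

variable {e : OpenPartialHomeomorph UnitSphere (EuclideanSpace ℝ (Fin 2))}

lemma hausdorffMeasure_image_sphere_and_image_ne_top
    (h : PreservesPolsbyPopper μH[2] volume e) (hs : 0 < s) (hsr : s < r) (hr : r < 2)
    (hre : closedBall o r ⊆ e.source) {T : Set UnitSphere} (hT : IsCompact T)
    (hTs : Disjoint T (sphere o s)) (hTr : T ⊆ ball o r) (hTlen : μH[1] T ≠ ⊤) :
    μH[1] (e '' sphere o r) ≠ ⊤ ∧ μH[1] (e '' T) ≠ ⊤ := by
  have hr₀ := hs.trans hsr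
  have hsphere := frontier_ball_eq_sphere (o := o) hr₀ hr.le
  have hW := isRegion_ball hr₀ hre
  rw [← hsphere]
  refine h.hausdorffMeasure_image_ne_top .rfl hW ?_ hT hTr hTlen (isCompact_sphere o s)
    (sphere_subset_closedBall.trans (closedBall_subset_ball hsr)) hTs
    (hausdorffMeasure_sphere_ne_zero hs (hsr.trans hr))
    (hausdorffMeasure_sphere_ne_top hs.le (hsr.trans hr).le)
  rw [hsphere]
  exact hausdorffMeasure_sphere_ne_top hr₀.le hr.le

lemma hausdorffMeasure_image_sphere_ne_top (h : PreservesPolsbyPopper μH[2] volume e) (hr₀ : 0 < r)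
    (hr : r < 2) (hre : closedBall o r ⊆ e.source) : μH[1] (e '' sphere o r) ≠ ⊤ :=
  (hausdorffMeasure_image_sphere_and_image_ne_top h (half_pos hr₀) (half_lt_self hr₀) hr hre
    isCompact_empty (Set.empty_disjoint _) (Set.empty_subset _) (by simp)).1

lemma hausdorffMeasure_ne_top_of_image (h : PreservesPolsbyPopper μH[2] volume e) (hs : 0 < s)
    (hsr : s < r) (hr : r < 2) (hre : closedBall o r ⊆ e.source) {F : Set UnitSphere}
    (hF : IsCompact F) (hFs : F ⊆ ball o s) (hFlen : μH[1] (e '' F) ≠ ⊤) : μH[1] F ≠ ⊤ := by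
  have hse : closedBall o s ⊆ e.source := (closedBall_subset_closedBall hsr.le).trans hre
  refine h.hausdorffMeasure_ne_top_of_image .rfl volume_absolutelyContinuous_hausdorffMeasure_two
    (isRegion_ball (hs.trans hsr) hre) ?_ (isRegion_ball hs hse) (ball_subset_ball hsr.le) ?_
    (fun L hL => exists_compact_le_hausdorffMeasure_image hs hsr hr (e.continuousOn.mono hre)
      (e.injOn.mono hre) hL) hF hFs hFlen
  · rw [frontier_ball_eq_sphere (hs.trans hsr) hr.le]
    exact hausdorffMeasure_sphere_ne_top (hs.trans hsr).le hr.le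
  · rw [frontier_ball_eq_sphere hs (hsr.trans hr).le]
    exact hausdorffMeasure_image_sphere_ne_top h hs (hsr.trans hr) hse

lemma hausdorffMeasure_image_le_of_disjoint (h : PreservesPolsbyPopper μH[2] volume e) (hs : 0 < s)
    (hsr : s < r) (hr : r < 2) (hre : closedBall o r ⊆ e.source) {T K : Set UnitSphere}
    (hT : IsCompact T) (hTs : T ⊆ ball o s) (hK : IsCompact K) (hKs : K ⊆ ball o s)
    (hTK : Disjoint T K) (hKlen : μH[1] K ≠ ⊤) (hlen : μH[1] T ≤ μH[1] K) :
    μH[1] (e '' T) ≤ μH[1] (e '' K) := by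
  have hr₀ := hs.trans hsr
  have hfrontier := frontier_ball_eq_sphere (o := o) hr₀ hr.le
  have hTsphere : Disjoint T (sphere o s) := (sphere_disjoint_ball.mono_right hTs).symm
  obtain ⟨hWlen', hTlen'⟩ := hausdorffMeasure_image_sphere_and_image_ne_top h hs hsr hr hre hT
    hTsphere (hTs.trans (ball_subset_ball hsr.le)) (ne_top_of_le_ne_top hKlen hlen)
  refine h.hausdorffMeasure_image_le_of_disjoint .rfl (isRegion_ball hr₀ hre) ?_ ?_ ?_ isOpen_ball
    (ball_subset_ball hsr.le) ?_
    (fun F hFs hF => hausdorffMeasure_ne_top_of_image h hs hsr hr hre hF hFs) hT hTs hTlen' hK hKs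
    hKlen hTK hlen
  · rw [hfrontier]
    exact hausdorffMeasure_sphere_ne_zero hr₀ hr
  · rw [hfrontier]
    exact hausdorffMeasure_sphere_ne_top hr₀.le hr.le
  · rwa [hfrontier]
  · obtain ⟨t, hst, htr⟩ := exists_between hsr
    obtain ⟨b, rfl⟩ := exists_polar_zero_eq o
    have hmem := polar_mem_sphere (b := b) (hs.trans hst).le (htr.trans hr).le 0
    exact ⟨_, sphere_subset_closedBall.trans (closedBall_subset_ball htr) hmem, fun hx =>
      (hst.trans_eq (mem_sphere.1 hmem).symm).not_ge (closure_ball_subset_closedBall hx)⟩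

lemma exists_pos_preservesEqDistOn (h : PreservesPolsbyPopper μH[2] volume e) (ho : o ∈ e.source) :
    ∃ κ > 0, ball o κ ⊆ e.source ∧ PreservesEqDistOn e (ball o κ) := by
  have hX := isTwoPointHomogeneous_sphere (F := EuclideanSpace ℝ (Fin 3)) 1
  obtain ⟨R, hR, hRe⟩ := nhds_basis_closedBall.mem_iff.1 (e.open_source.mem_nhds ho)
  obtain ⟨r, hr₀, hrR⟩ := exists_between (lt_min hR zero_lt_two)
  obtain ⟨hr, hr₂⟩ := lt_min_iff.1 hrR
  have hre : closedBall o r ⊆ e.source := (closedBall_subset_closedBall hr.le).trans hRe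
  obtain ⟨s, hs, hsr⟩ := exists_between hr₀
  obtain ⟨t, ht, hts⟩ := exists_between hs
  have hback : ∀ F ⊆ ball o s, IsCompact F → μH[1] (e '' F) ≠ ⊤ → μH[1] F ≠ ⊤ := fun F hFs hF =>
    hausdorffMeasure_ne_top_of_image h hs hsr hr₂ hre hF hFs
  obtain ⟨q, hq⟩ : (sphere o t).Nonempty :=
    nonempty_of_measure_ne_zero (hausdorffMeasure_sphere_ne_zero ht (hts.trans (hsr.trans hr₂)))
  have hoq : o ≠ q := (ne_of_mem_sphere hq ht.ne').symm
  obtain ⟨κ, hκ, hκs, hle⟩ := hX.exists_pos_hausdorffMeasure_image_le isOpen_ball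
    (mem_ball_self hs) (sphere_subset_closedBall.trans (closedBall_subset_ball hts) hq) hoq
    fun T hT K hK hTc hKc => hausdorffMeasure_image_le_of_disjoint h hs hsr hr₂ hre hTc hT hKc hK
  have hκe : ball o κ ⊆ e.source := (hκs.trans (ball_subset_ball hsr.le)).trans
    (ball_subset_closedBall.trans hre)
  obtain ⟨ρ, hρ, hρκ, hdist⟩ := hX.exists_pos_preservesEqDistOn isOpen_ball hκe (mem_ball_self hκ)
    (fun F hF => hback F (hF.trans hκs)) hle
  exact ⟨ρ, hρ, hρκ.trans hκe, hdist⟩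

lemma exists_cos_eq_one_add_cos_sq_div_two {α : ℝ} (hα₀ : 0 < α) (hα : α ≤ π) :
    ∃ β ∈ Set.Ico 0 α, cos β = (1 + cos α ^ 2) / 2 := by
  have hcosα : cos α < 1 := (cos_lt_cos_of_nonneg_of_le_pi le_rfl hα hα₀).trans_eq cos_zero
  refine ⟨arccos ((1 + cos α ^ 2) / 2), ⟨arccos_nonneg _, ?_⟩,
    cos_arccos (by nlinarith) (by nlinarith [cos_sq_le_one α])⟩
  conv_rhs => rw [← arccos_cos hα₀.le hα]
  exact arccos_lt_arccos (neg_one_le_cos α) (by nlinarith) (by nlinarith [cos_sq_le_one α])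

-- On the circle of colatitude `α`, the points at azimuths `-π / 3`, `π / 3` and `π` form an
-- equilateral triangle, and the point at azimuth `0` lies halfway between the first two.
-- Neighbours in the resulting hexagon are as far from each other as `polar b β 0` from the pole.
lemma exists_dist_polar_eq {Y : Type*} [NormedAddCommGroup Y] [InnerProductSpace ℝ Y]
    (hY : Module.finrank ℝ Y = 2) {φ : UnitSphere → Y}
    {b : OrthonormalBasis (Fin 3) ℝ (EuclideanSpace ℝ (Fin 3))} {κ : ℝ}
    (hinj : Set.InjOn φ (ball (polar b 0 0) κ))
    (hφ : PreservesEqDistOn φ (ball (polar b 0 0) κ))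
    {α : ℝ} (hα₀ : 0 < α) (hα : α ≤ 1) (hακ : α < κ) :
    ∃ β ∈ Set.Ico 0 α, dist (φ (polar b β 0)) (φ (polar b 0 0)) =
      dist (φ (polar b α 0)) (φ (polar b 0 0)) := by
  have hmem : ∀ θ, polar b α θ ∈ ball (polar b 0 0) κ := fun θ =>
    (dist_polar_pole_le hα₀.le θ).trans_lt hακ
  have hpole : polar b 0 0 ∈ ball (polar b 0 0) κ := mem_ball_self (hα₀.trans hακ)
  have hchord : ∀ {θ η θ' η' : ℝ}, cos (θ - η) = cos (θ' - η') →
      dist (φ (polar b α θ)) (φ (polar b α η)) = dist (φ (polar b α θ')) (φ (polar b α η')) :=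
    fun hcos => hφ _ (hmem _) _ (hmem _) _ (hmem _) _ (hmem _) (dist_polar_polar_eq α hcos)
  have hradius : ∀ θ η, dist (φ (polar b α θ)) (φ (polar b 0 0)) =
      dist (φ (polar b α η)) (φ (polar b 0 0)) := fun θ η =>
    hφ _ (hmem θ) _ hpole _ (hmem η) _ hpole (dist_polar_pole_eq α θ η)
  have hne : ∀ {θ η : ℝ}, cos (θ - η) ≠ 1 → φ (polar b α θ) ≠ φ (polar b α η) := fun hcos =>
    hinj.ne (hmem _) (hmem _) (polar_ne_polar (sin_pos_of_pos_of_le_one hα₀ hα).ne' hcos)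
  have hcos : cos (2 * π / 3) ≠ 1 := by
    rw [← cos_zero]
    exact (cos_lt_cos_of_nonneg_of_le_pi le_rfl (by linarith [pi_pos]) (by positivity)).ne
  obtain ⟨β, hβ, hcosβ⟩ :=
    exists_cos_eq_one_add_cos_sq_div_two hα₀ (hα.trans (by linarith [pi_gt_three]))
  refine ⟨β, hβ, ?_⟩
  calc dist (φ (polar b β 0)) (φ (polar b 0 0))
      = dist (φ (polar b α (-π / 3))) (φ (polar b α 0)) := by
        refine hφ _ ((dist_polar_pole_le hβ.1 0).trans_lt (hβ.2.trans hακ)) _ hpole _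
          (hmem _) _ (hmem _) ?_
        rw [← sq_eq_sq₀ dist_nonneg dist_nonneg, dist_polar_pole_sq, dist_polar_polar_sq, hcosβ,
          sub_zero, neg_div, cos_neg, cos_pi_div_three]
        linear_combination -cos_sq_add_sin_sq α
    _ = dist (φ (polar b α (-π / 3))) (φ (polar b 0 0)) := by
        refine dist_eq_of_hexagon (b := φ (polar b α (π / 3))) (c := φ (polar b α π)) hY
          (hradius _ _) (hradius _ _) (hradius _ _) (hchord ?_) (hchord ?_) (hchord ?_) (hne ?_)
          (hne ?_)
        · ring_nf
        · rw [← cos_neg, ← cos_two_pi_sub]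
          ring_nf
        · rw [← cos_neg]
          ring_nf
        · rwa [← cos_neg, show -(-π / 3 - π / 3) = 2 * π / 3 by ring]
        · rw [zero_sub, cos_neg, cos_pi]
          norm_num
    _ = dist (φ (polar b α 0)) (φ (polar b 0 0)) := hradius _ _

lemma not_preservesPolsbyPopper (he : e.source.Nonempty) :
    ¬ PreservesPolsbyPopper μH[2] volume e := by
  intro h
  obtain ⟨o, ho⟩ := he
  obtain ⟨κ, hκ, hκe, hdist⟩ := exists_pos_preservesEqDistOn h ho
  obtain ⟨b, rfl⟩ := exists_polar_zero_eq o
  obtain ⟨a, ha₀, ha⟩ := exists_between (lt_min hκ one_pos)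
  obtain ⟨haκ, ha₁⟩ := lt_min_iff.1 ha
  have hmem : ∀ α ∈ Set.Icc 0 a, polar b α 0 ∈ ball (polar b 0 0) κ := fun α hα =>
    (dist_polar_pole_le hα.1 0).trans_lt (hα.2.trans_lt haκ)
  have hcont : ContinuousOn (fun α => dist (e (polar b α 0)) (e (polar b 0 0))) (Set.Icc 0 a) :=
    continuous_dist.comp_continuousOn (ContinuousOn.prodMk ((e.continuousOn.mono hκe).comp
      (continuous_polar continuous_id continuous_const).continuousOn hmem) continuousOn_const)
  have hzero := eq_apply_zero_of_forall_exists_lt ha₀.le hcont fun α hα =>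
    exists_dist_polar_eq finrank_euclideanSpace_fin (e.injOn.mono hκe) hdist hα.1
      (hα.2.trans ha₁.le) (hα.2.trans_lt haκ)
  have hpole : polar b a 0 = polar b 0 0 := (e.injOn.mono hκe) (hmem a ⟨ha₀.le, le_rfl⟩)
    (mem_ball_self hκ) (dist_eq_zero.1 (hzero.trans (dist_self _)))
  have hcos := dist_polar_pole_sq (b := b) a 0
  rw [hpole, dist_self] at hcos
  linarith [cos_lt_cos_of_nonneg_of_le_pi le_rfl (ha₁.le.trans (by linarith [pi_gt_three])) ha₀,
    cos_zero]

end UnitSphere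

section Subtype

variable {E Y : Type*} [TopologicalSpace E] [TopologicalSpace Y] {S U : Set E}

lemma exists_openPartialHomeomorph_coe_eq_comp_val {V : Set Y} {φ : E → Y} {ψ : Y → E}
    (hUS : U ⊆ S) (hUne : U.Nonempty) (hU : IsOpen (Subtype.val ⁻¹' U : Set S)) (hV : IsOpen V)
    (hφV : φ '' U = V) (hφ : ContinuousOn φ U) (hψ : ContinuousOn ψ V) (hψφ : Set.LeftInvOn ψ φ U) :
    ∃ e : OpenPartialHomeomorph S Y, e.source = Subtype.val ⁻¹' U ∧ ⇑e = φ ∘ Subtype.val := by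
  have : Nonempty S := hUne.to_subtype.map (Set.inclusion hUS)
  have hbij : Set.BijOn (φ ∘ Subtype.val) (Subtype.val ⁻¹' U : Set S) V := by
    refine ⟨fun x hx => hφV.subset ⟨x, hx, rfl⟩,
      hψφ.injOn.comp Subtype.val_injective.injOn (Set.mapsTo_preimage _ _), ?_⟩
    rintro y hy
    obtain ⟨x, hx, rfl⟩ := hφV.superset hy
    exact ⟨⟨x, hUS hx⟩, hx, rfl⟩
  refine ⟨{
    toPartialEquiv := hbij.toPartialEquiv
    open_source := hU
    open_target := hV
    continuousOn_toFun := hφ.comp continuous_subtype_val.continuousOn (Set.mapsTo_preimage _ _)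
    continuousOn_invFun := ?_ }, rfl, rfl⟩
  refine Topology.IsInducing.subtypeVal.continuousOn_iff.2 (hψ.congr fun y hy => ?_)
  have hinv : φ (hbij.toPartialEquiv.symm y : S) = y := hbij.toPartialEquiv.right_inv hy
  exact (hψφ (hbij.toPartialEquiv.map_target hy)).symm.trans (congrArg ψ hinv)

lemma closure_image_val (hS : IsClosed S) (A : Set S) :
    closure (Subtype.val '' A : Set E) = Subtype.val '' closure A :=
  hS.isClosedEmbedding_subtypeVal.closure_image_eq A

lemma IsRegion.image_val {A : Set S} (hS : IsClosed S) (hA : IsRegion (Subtype.val ⁻¹' U) A) :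
    (Subtype.val '' A).Nonempty ∧ (∃ G, IsOpen G ∧ Subtype.val '' A = S ∩ G) ∧
      IsCompact (closure (Subtype.val '' A)) ∧ closure (Subtype.val '' A) ⊆ U := by
  rw [closure_image_val hS]
  obtain ⟨G, hG, rfl⟩ := isOpen_induced_iff.1 hA.isOpen
  exact ⟨hA.nonempty.image _, ⟨G, hG, Subtype.image_preimage_coe S G⟩,
    hA.isCompact_closure.image continuous_subtype_val, Set.image_subset_iff.2 hA.closure_subset⟩

end Subtype

lemma ppSphere_image_val (A : Set UnitSphere) :
    ppSphere (Subtype.val '' A) = polsbyPopper μH[2] A := by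
  have hval : Isometry (Subtype.val : UnitSphere → EuclideanSpace ℝ (Fin 3)) := isometry_subtype_coe
  have hcompl : sphere (0 : EuclideanSpace ℝ (Fin 3)) 1 \ Subtype.val '' A = Subtype.val '' Aᶜ := by
    rw [Set.image_compl_eq_range_sdiff_image Subtype.val_injective, Subtype.range_val]
  rw [ppSphere, polsbyPopper, hcompl, closure_image_val isClosed_sphere,
    closure_image_val isClosed_sphere, ← Set.image_inter Subtype.val_injective,
    ← frontier_eq_closure_inter_closure, hval.hausdorffMeasure_image (.inl zero_le_two),
    hval.hausdorffMeasure_image (.inl zero_le_one)]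

lemma ppPlane_eq_polsbyPopper (A : Set (EuclideanSpace ℝ (Fin 2))) :
    ppPlane A = polsbyPopper volume A := rfl

/-- No map projection preserves the ordering of regions by Polsby-Popper score:
for every homeomorphism `φ` from a nonempty relatively open subset of the sphere onto an
open subset of the plane, there are regions `A ⊆ B` where `B` is strictly more compact
than `A` on the sphere, but `φ '' A` is at least as compact as `φ '' B` in the plane. -/
theorem no_projection_preserves_polsbyPopper_ordering
    (U : Set (EuclideanSpace ℝ (Fin 3))) (V : Set (EuclideanSpace ℝ (Fin 2)))
    (φ : EuclideanSpace ℝ (Fin 3) → EuclideanSpace ℝ (Fin 2))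
    (ψ : EuclideanSpace ℝ (Fin 2) → EuclideanSpace ℝ (Fin 3))
    (hUne : U.Nonempty)
    (hUopen : ∃ G : Set (EuclideanSpace ℝ (Fin 3)), IsOpen G ∧
      U = sphere (0 : EuclideanSpace ℝ (Fin 3)) 1 ∩ G)
    (hVopen : IsOpen V)
    (hφV : φ '' U = V) (hψU : ψ '' V = U)
    (hφcont : ContinuousOn φ U) (hψcont : ContinuousOn ψ V)
    (hψφ : ∀ p ∈ U, ψ (φ p) = p) (hφψ : ∀ q ∈ V, φ (ψ q) = q) :
    ∃ A B : Set (EuclideanSpace ℝ (Fin 3)),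
      A.Nonempty ∧ B.Nonempty ∧
      (∃ G : Set (EuclideanSpace ℝ (Fin 3)), IsOpen G ∧
        A = sphere (0 : EuclideanSpace ℝ (Fin 3)) 1 ∩ G) ∧
      (∃ G : Set (EuclideanSpace ℝ (Fin 3)), IsOpen G ∧
        B = sphere (0 : EuclideanSpace ℝ (Fin 3)) 1 ∩ G) ∧
      IsCompact (closure A) ∧ IsCompact (closure B) ∧
      closure A ⊆ U ∧ closure B ⊆ U ∧ A ⊆ B ∧
      ppSphere A < ppSphere B ∧ ppPlane (φ '' A) ≥ ppPlane (φ '' B) := by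
  obtain ⟨G, hG, rfl⟩ := hUopen
  have hUsource : IsOpen (Subtype.val ⁻¹' (sphere 0 1 ∩ G) : Set UnitSphere) := by
    rw [Subtype.preimage_coe_self_inter]
    exact hG.preimage continuous_subtype_val
  obtain ⟨e, hsource, he⟩ := exists_openPartialHomeomorph_coe_eq_comp_val Set.inter_subset_left
    hUne hUsource hVopen hφV hφcont hψcont hψφ
  have hne : e.source.Nonempty := by
    obtain ⟨x, hx⟩ := hUne
    exact hsource ▸ ⟨⟨x, hx.1⟩, hx⟩
  by_contra hnone
  refine UnitSphere.not_preservesPolsbyPopper hne fun A B hA hB hAB hlt => ?_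
  rw [hsource] at hA hB
  obtain ⟨hAne, hAopen, hAcompact, hAU⟩ := hA.image_val isClosed_sphere
  obtain ⟨hBne, hBopen, hBcompact, hBU⟩ := hB.image_val isClosed_sphere
  rw [← ppSphere_image_val, ← ppSphere_image_val] at hlt
  rw [he, Set.image_comp, Set.image_comp, ← ppPlane_eq_polsbyPopper, ← ppPlane_eq_polsbyPopper]
  by_contra hle
  exact hnone ⟨_, _, hAne, hBne, hAopen, hBopen, hAcompact, hBcompact, hAU, hBU,
    Set.image_mono hAB, hlt, not_lt.1 hle⟩
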